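/- Let (u, π, v, θ) be a smooth solution of the stationary 3D tropical climate model. Suppose p ∈ [3, 9/2], q ∈ [2p′, 6], r ∈ [2p′, 6] where p′ = p/(p−1), with 1/p + 2/q ≥ 2/3, 1/p + 2/r ≥ 2/3 and 1/q + 1/r ≥ 2/3, and u ∈ L^p(ℝ³), v ∈ L^q(ℝ³), θ ∈ L^r(ℝ³). Then u = 0, v = 0 and θ = 0 identically on ℝ³. -/

import Mathlib

open MeasureTheory Filter Metric

noncomputable section

abbrev R3 : Type := EuclideanSpace ℝ (Fin 3)

/-- Partial derivative of `f` in the `j`-th coordinate direction. -/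
def pd (f : R3 → ℝ) (j : Fin 3) (x : R3) : ℝ :=
  fderiv ℝ f x (EuclideanSpace.single j 1)

/-- Laplacian of `f`. -/
def lap (f : R3 → ℝ) (x : R3) : ℝ := ∑ j, pd (pd f j) j x

/-- The stationary 3D tropical climate model:
`-Δu + (u·∇)u + ∇π + div(v⊗v) = 0`, `-Δv + (u·∇)v + ∇θ + (v·∇)u = 0`,
`-Δθ + u·∇θ + div v = 0`, `div u = 0`. -/
def TCM (u v : R3 → R3) (pr θ : R3 → ℝ) : Prop :=
  (∀ i x, -lap (fun y => u y i) x + (∑ j, u x j * pd (fun y => u y i) j x)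
      + pd pr i x + (∑ j, pd (fun y => v y j * v y i) j x) = 0) ∧
  (∀ i x, -lap (fun y => v y i) x + (∑ j, u x j * pd (fun y => v y i) j x)
      + pd θ i x + (∑ j, v x j * pd (fun y => u y i) j x) = 0) ∧
  (∀ x, -lap θ x + (∑ j, u x j * pd θ j x) + (∑ j, pd (fun y => v y j) j x) = 0) ∧
  (∀ x, (∑ j, pd (fun y => u y j) j x) = 0)

abbrev Sm (f : R3 → ℝ) : Prop := ContDiff ℝ (⊤ : ℕ∞) f

lemma Sm.diff {f : R3 → ℝ} (hf : Sm f) : Differentiable ℝ f :=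
  ContDiff.differentiable hf (by simp)

lemma Sm.cont {f : R3 → ℝ} (hf : Sm f) : Continuous f := ContDiff.continuous hf

lemma Sm.pd {f : R3 → ℝ} (hf : Sm f) (j : Fin 3) : Sm (pd f j) := by
  have h : ContDiff ℝ (⊤ : ℕ∞) (fderiv ℝ f) := by
    apply ContDiff.fderiv_right (n := ((⊤ : ℕ∞) : WithTop ℕ∞)) hf
    exact le_of_eq rfl
  exact h.clm_apply contDiff_const

lemma Sm.mul {f g : R3 → ℝ} (hf : Sm f) (hg : Sm g) : Sm (fun x => f x * g x) := ContDiff.mul hf hg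
lemma Sm.add {f g : R3 → ℝ} (hf : Sm f) (hg : Sm g) : Sm (fun x => f x + g x) := ContDiff.add hf hg
lemma Sm.sub {f g : R3 → ℝ} (hf : Sm f) (hg : Sm g) : Sm (fun x => f x - g x) := ContDiff.sub hf hg
lemma Sm.neg {f : R3 → ℝ} (hf : Sm f) : Sm (fun x => - f x) := ContDiff.neg hf
lemma Sm.cst (c : ℝ) : Sm (fun _ => c) := contDiff_const
lemma Sm.pow {f : R3 → ℝ} (hf : Sm f) (n : ℕ) : Sm (fun x => f x ^ n) := ContDiff.pow hf n
lemma Sm.sum {f : Fin 3 → R3 → ℝ} (hf : ∀ i, Sm (f i)) : Sm (fun x => ∑ i, f i x) :=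
  ContDiff.sum (fun i _ => hf i)
lemma Sm.coord (i : Fin 3) : Sm (fun x => x i) := by
  unfold Sm; fun_prop
lemma Sm.comp_smul {f : R3 → ℝ} (hf : Sm f) (c : ℝ) : Sm (fun x => f (c • x)) :=
  ContDiff.comp hf (contDiff_const_smul c)
lemma Sm.lap {f : R3 → ℝ} (hf : Sm f) : Sm (lap f) := Sm.sum (fun i => (hf.pd i).pd i)

lemma pd_mul {f g : R3 → ℝ} (hf : Sm f) (hg : Sm g) (j : Fin 3) (x : R3) :
    pd (fun y => f y * g y) j x = pd f j x * g x + f x * pd g j x := by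
  unfold pd
  rw [fderiv_fun_mul (hf.diff x) (hg.diff x)]
  simp; ring

lemma pd_add {f g : R3 → ℝ} (hf : Sm f) (hg : Sm g) (j : Fin 3) (x : R3) :
    pd (fun y => f y + g y) j x = pd f j x + pd g j x := by
  unfold pd
  rw [fderiv_fun_add (hf.diff x) (hg.diff x)]
  simp

lemma pd_sub {f g : R3 → ℝ} (hf : Sm f) (hg : Sm g) (j : Fin 3) (x : R3) :
    pd (fun y => f y - g y) j x = pd f j x - pd g j x := by
  unfold pd
  rw [fderiv_fun_sub (hf.diff x) (hg.diff x)]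
  simp

lemma pd_neg {f : R3 → ℝ} (j : Fin 3) (x : R3) :
    pd (fun y => - f y) j x = - pd f j x := by
  unfold pd
  rw [fderiv_fun_neg]
  simp

lemma pd_const (c : ℝ) (j : Fin 3) (x : R3) : pd (fun _ => c) j x = 0 := by
  unfold pd
  simp

lemma pd_cmul {f : R3 → ℝ} (hf : Sm f) (c : ℝ) (j : Fin 3) (x : R3) :
    pd (fun y => c * f y) j x = c * pd f j x := by
  rw [pd_mul (Sm.cst c) hf, pd_const]; ring

lemma pd_sum {f : Fin 3 → R3 → ℝ} (hf : ∀ i, Sm (f i)) (j : Fin 3) (x : R3) :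
    pd (fun y => ∑ i, f i y) j x = ∑ i, pd (f i) j x := by
  unfold pd
  rw [fderiv_fun_sum (fun i _ => (hf i).diff x)]
  simp

lemma pd_pow {f : R3 → ℝ} (hf : Sm f) (n : ℕ) (j : Fin 3) (x : R3) :
    pd (fun y => f y ^ (n+1)) j x = (n+1) * f x ^ n * pd f j x := by
  unfold pd
  rw [fderiv_fun_pow _ (hf.diff x)]
  simp

lemma pd_coord (i j : Fin 3) (x : R3) : pd (fun y => y i) j x = if i = j then 1 else 0 := by
  unfold pd
  have : (fun y : R3 => y i) = (EuclideanSpace.proj i : R3 →L[ℝ] ℝ) := by ext; rfl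
  rw [this, ContinuousLinearMap.fderiv]
  simp

lemma pd_comp_smul {f : R3 → ℝ} (hf : Sm f) (c : ℝ) (j : Fin 3) (x : R3) :
    pd (fun y => f (c • y)) j x = c * pd f j (c • x) := by
  unfold pd
  have h : HasFDerivAt (fun y : R3 => f (c • y))
      ((fderiv ℝ f (c • x)).comp (c • ContinuousLinearMap.id ℝ R3)) x :=
    HasFDerivAt.comp x (hf.diff (c • x)).hasFDerivAt ((hasFDerivAt_id x).const_smul c)
  rw [h.fderiv]; simp

lemma pd_comm {f : R3 → ℝ} (hf : Sm f) (i j : Fin 3) (x : R3) :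
    pd (pd f i) j x = pd (pd f j) i x := by
  have h2 : DifferentiableAt ℝ (fderiv ℝ f) x := by
    have h : ContDiff ℝ (⊤ : ℕ∞) (fderiv ℝ f) := by
      apply ContDiff.fderiv_right (n := ((⊤ : ℕ∞) : WithTop ℕ∞)) hf
      exact le_of_eq rfl
    exact h.differentiable (by simp) x
  have hs : IsSymmSndFDerivAt ℝ f x := ContDiffAt.isSymmSndFDerivAt (n := ((⊤ : ℕ∞) : WithTop ℕ∞))
    (ContDiff.contDiffAt hf) (by simp; exact WithTop.coe_le_coe.2 (le_top : (2:ℕ∞) ≤ ⊤))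
  have key : ∀ a b : Fin 3, pd (pd f a) b x =
      fderiv ℝ (fderiv ℝ f) x (EuclideanSpace.single b 1) (EuclideanSpace.single a 1) := by
    intro a b
    unfold pd
    rw [fderiv_clm_apply h2 (differentiableAt_const _)]
    simp
  rw [key, key, hs.eq]

lemma fderiv_eq_zero_of_pd {f : R3 → ℝ} {x : R3} (h : ∀ j, pd f j x = 0) : fderiv ℝ f x = 0 := by
  apply ContinuousLinearMap.coe_injective
  apply (EuclideanSpace.basisFun (Fin 3) ℝ).toBasis.ext
  intro i
  simpa [pd] using h i

lemma hcs_pd {f : R3 → ℝ} (hf : HasCompactSupport f) (j : Fin 3) : HasCompactSupport (pd f j) := by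
  exact hf.fderiv_apply ℝ _

/-- continuous, compactly supported, zero integral -/
structure Nul (g : R3 → ℝ) : Prop where
  c : Continuous g
  s : HasCompactSupport g
  i : ∫ x, g x = 0

lemma int_cc {g : R3 → ℝ} (hc : Continuous g) (hs : HasCompactSupport g) : Integrable g :=
  hc.integrable_of_hasCompactSupport hs

lemma int_pd_zero {f : R3 → ℝ} (hf : Sm f) (hc : HasCompactSupport f) (j : Fin 3) :
    ∫ x, pd f j x = 0 := by
  have h := integral_mul_fderiv_eq_neg_fderiv_mul_of_integrable (μ := (volume : Measure R3))
    (f := fun _ : R3 => (1:ℝ)) (g := f) (v := EuclideanSpace.single j 1) (by simp)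
    (by simp only [one_mul]; exact int_cc (hf.pd j).cont (hcs_pd hc j))
    (by simpa using int_cc hf.cont hc) (by fun_prop) (fun x _ => (hf.diff x))
  simpa [pd] using h

lemma Nul.pd {f : R3 → ℝ} (hf : Sm f) (hc : HasCompactSupport f) (j : Fin 3) :
    Nul (fun x => pd f j x) := ⟨(hf.pd j).cont, hcs_pd hc j, int_pd_zero hf hc j⟩

lemma Nul.add {f g : R3 → ℝ} (hf : Nul f) (hg : Nul g) : Nul (fun x => f x + g x) :=
  ⟨hf.c.add hg.c, hf.s.add hg.s, by
    rw [integral_add (int_cc hf.c hf.s) (int_cc hg.c hg.s), hf.i, hg.i, add_zero]⟩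

lemma Nul.sum {f : Fin 3 → R3 → ℝ} (hf : ∀ i, Nul (f i)) : Nul (fun x => ∑ i, f i x) := by
  simp only [Fin.sum_univ_three]
  exact ((hf 0).add (hf 1)).add (hf 2)

lemma Nul.congr {f g : R3 → ℝ} (hf : Nul f) (h : ∀ x, f x = g x) : Nul g := by
  have : f = g := funext h
  exact this ▸ hf

lemma Nul.div {f : Fin 3 → R3 → ℝ} (hf : ∀ i, Sm (f i)) (hc : ∀ i, HasCompactSupport (f i)) :
    Nul (fun x => ∑ i, _root_.pd (f i) i x) :=
  Nul.sum (fun i => Nul.pd (hf i) (hc i) i)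

/-- LemA : energy identity for a scalar function. -/
lemma lemA {f φ : R3 → ℝ} {b : Fin 3 → R3 → ℝ} (hf : Sm f) (hφ : Sm φ) (hc : HasCompactSupport φ)
    (hb : ∀ i, Sm (b i)) (hdiv : ∀ x, ∑ j, pd (b j) j x = 0) :
    Nul (fun x => (-lap f x + ∑ j, b j x * pd f j x) * (φ x * f x)
      - (φ x * ∑ j, pd f j x ^ 2) + 1/2 * (f x ^ 2 * lap φ x)
      + 1/2 * (f x ^ 2 * ∑ j, b j x * pd φ j x)) := by
  have h1 : ∀ j, Sm (fun x => (- pd f j x * (φ x * f x) + 1/2 * (f x ^ 2 * pd φ j x))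
      + 1/2 * (b j x * (φ x * f x ^ 2))) := fun j =>
    (((hf.pd j).neg.mul (hφ.mul hf)).add ((Sm.cst (1/2)).mul ((hf.pow 2).mul (hφ.pd j)))).add
      ((Sm.cst (1/2)).mul ((hb j).mul (hφ.mul (hf.pow 2))))
  have h2 : ∀ j, HasCompactSupport (fun x => (- pd f j x * (φ x * f x) + 1/2 * (f x ^ 2 * pd φ j x))
      + 1/2 * (b j x * (φ x * f x ^ 2))) := fun j =>
    ((hc.mul_right.mul_left).add ((hcs_pd hc j).mul_left.mul_left)).add
      (hc.mul_right.mul_left.mul_left)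
  refine (Nul.div h1 h2).congr fun x => ?_
  have h3 : ∀ j, pd (fun x => (- pd f j x * (φ x * f x) + 1/2 * (f x ^ 2 * pd φ j x))
      + 1/2 * (b j x * (φ x * f x ^ 2))) j x =
      - pd (pd f j) j x * (φ x * f x) - pd f j x * (pd φ j x * f x + φ x * pd f j x)
      + 1/2 * (2 * f x * pd f j x * pd φ j x + f x ^ 2 * pd (pd φ j) j x)
      + 1/2 * (pd (b j) j x * (φ x * f x ^ 2) + b j x * (pd φ j x * f x ^ 2
        + φ x * (2 * f x * pd f j x))) := by
    intro j
    have e2 : pd (fun x => f x ^ 2) j x = 2 * f x * pd f j x := by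
      rw [pd_pow hf 1]; norm_num
    rw [pd_add (((hf.pd j).neg.mul (hφ.mul hf)).add ((Sm.cst (1/2)).mul ((hf.pow 2).mul (hφ.pd j))))
      ((Sm.cst (1/2)).mul ((hb j).mul (hφ.mul (hf.pow 2)))),
      pd_add ((hf.pd j).neg.mul (hφ.mul hf)) ((Sm.cst (1/2)).mul ((hf.pow 2).mul (hφ.pd j))),
      pd_mul (hf.pd j).neg (hφ.mul hf), pd_neg, pd_mul hφ hf,
      pd_cmul ((hf.pow 2).mul (hφ.pd j)), pd_mul (hf.pow 2) (hφ.pd j),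
      pd_cmul ((hb j).mul (hφ.mul (hf.pow 2))), pd_mul (hb j) (hφ.mul (hf.pow 2)),
      pd_mul hφ (hf.pow 2), e2]
    ring
  simp only [h3]
  have := hdiv x
  unfold lap
  simp only [Fin.sum_univ_three] at this ⊢
  linear_combination (1/2 * (φ x * f x ^ 2)) * this

lemma pd_tsupp (f : R3 → ℝ) (j : Fin 3) : tsupport (pd f j) ⊆ tsupport f :=
  tsupport_fderiv_apply_subset ℝ _

lemma pd_off {f : R3 → ℝ} {x : R3} (j : Fin 3) (h : x ∉ tsupport f) : pd f j x = 0 :=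
  image_eq_zero_of_notMem_tsupport (fun h' => h (pd_tsupp f j h'))

lemma pd2_off {f : R3 → ℝ} {x : R3} (j k : Fin 3) (h : x ∉ tsupport f) : pd (pd f j) k x = 0 :=
  pd_off k (fun h' => h (pd_tsupp f j h'))

lemma lap_off {f : R3 → ℝ} {x : R3} (h : x ∉ tsupport f) : lap f x = 0 := by
  unfold lap; exact Finset.sum_eq_zero fun j _ => pd2_off j j h

structure Cut (a b : ℝ) (χ : R3 → ℝ) : Prop where
  sm : Sm χ
  nn : ∀ x, 0 ≤ χ x
  le : ∀ x, χ x ≤ 1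
  one : ∀ x ∈ closedBall (0:R3) a, χ x = 1
  supp : tsupport χ ⊆ closedBall (0:R3) b

lemma Cut.hcs {a b : ℝ} {χ : R3 → ℝ} (h : Cut a b χ) : HasCompactSupport χ :=
  (isCompact_closedBall (0:R3) b).of_isClosed_subset (isClosed_tsupport _) h.supp

lemma exists_cut {a b : ℝ} (ha : 0 < a) (hab : a < b) : ∃ χ, Cut a b χ := by
  let f : ContDiffBump (0 : R3) := ⟨a, b, ha, hab⟩
  refine ⟨f, f.contDiff, fun x => f.nonneg, fun x => f.le_one, fun x hx => f.one_of_mem_closedBall hx, ?_⟩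
  rw [f.tsupport_eq]

lemma bdd_cc {g : R3 → ℝ} (hc : Continuous g) (hs : HasCompactSupport g) :
    ∃ C, 0 ≤ C ∧ ∀ x, |g x| ≤ C := by
  obtain ⟨C, hC⟩ := hs.exists_bound_of_continuous hc
  exact ⟨C, (norm_nonneg _).trans (hC 0), hC⟩

lemma cint (g : R3 → ℝ) (hg : Continuous g) (b : ℝ) : IntegrableOn g (closedBall (0:R3) b) :=
  hg.continuousOn.integrableOn_compact (isCompact_closedBall _ _)

lemma cc_le {g h : R3 → ℝ} {b : ℝ} (hg : Continuous g) (hh : Continuous h)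
    (h0 : ∀ x ∉ closedBall (0:R3) b, g x = 0) (hle : ∀ x ∈ closedBall (0:R3) b, g x ≤ h x) :
    ∫ x, g x ≤ ∫ x in closedBall (0:R3) b, h x := by
  rw [← setIntegral_eq_integral_of_forall_compl_eq_zero h0]
  exact setIntegral_mono_on (cint g hg b) (cint h hh b) measurableSet_closedBall hle

lemma ball_le {F G : R3 → ℝ} {a : ℝ} (hF : Continuous F) (hG : Continuous G)
    (hs : HasCompactSupport G) (h0 : ∀ x, 0 ≤ G x) (hle : ∀ x ∈ closedBall (0:R3) a, F x ≤ G x) :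
    ∫ x in closedBall (0:R3) a, F x ≤ ∫ x, G x := by
  refine (setIntegral_mono_on (cint F hF a) (cint G hG a) measurableSet_closedBall hle).trans ?_
  exact setIntegral_le_integral (int_cc hG hs) (Filter.Eventually.of_forall h0)

lemma cacc {a b : ℝ} (ha : 0 < a) (hab : a < b) : ∃ C, 0 ≤ C ∧ ∀ M : R3 → ℝ, Sm M →
    ∫ x in closedBall (0:R3) a, ∑ j, pd M j x ^ 2
      ≤ C * ∫ x in closedBall (0:R3) b, (M x ^ 2 + lap M x ^ 2) := by
  obtain ⟨χ, hχ⟩ := exists_cut ha hab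
  obtain ⟨K, hK0, hK⟩ := bdd_cc hχ.sm.lap.cont (by
    have : HasCompactSupport (fun x => ∑ j, pd (pd χ j) j x) := by
      simp only [Fin.sum_univ_three]
      exact ((hcs_pd (hcs_pd hχ.hcs 0) 0).add (hcs_pd (hcs_pd hχ.hcs 1) 1)).add
        (hcs_pd (hcs_pd hχ.hcs 2) 2)
    exact this)
  refine ⟨K + 1, by positivity, fun M hM => ?_⟩
  have hN := lemA (b := fun _ _ => 0) hM hχ.sm hχ.hcs (fun _ => Sm.cst 0) (fun x => by simp [pd_const])
  have cM := hM.cont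
  have cL := hM.lap.cont
  have cχ := hχ.sm.cont
  have cLχ := hχ.sm.lap.cont
  have cP : ∀ j, Continuous (pd M j) := fun j => (hM.pd j).cont
  have c1 : Continuous (fun x => χ x * ∑ j, pd M j x ^ 2) := by fun_prop
  have s1 : HasCompactSupport (fun x => χ x * ∑ j, pd M j x ^ 2) := hχ.hcs.mul_right
  have c2 : Continuous (fun x => - lap M x * (χ x * M x) + 1/2 * (M x ^ 2 * lap χ x)) := by fun_prop
  have e : ∫ x, χ x * ∑ j, pd M j x ^ 2 =
      ∫ x, (- lap M x * (χ x * M x) + 1/2 * (M x ^ 2 * lap χ x)) := by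
    have h2 := integral_add (int_cc hN.c hN.s) (int_cc c1 s1)
    rw [hN.i, zero_add] at h2
    rw [← h2]
    congr 1
    ext x
    simp
    ring
  calc ∫ x in closedBall (0:R3) a, ∑ j, pd M j x ^ 2
      ≤ ∫ x, χ x * ∑ j, pd M j x ^ 2 := by
        refine ball_le (by fun_prop) c1 s1
          (fun x => mul_nonneg (hχ.nn x) (Finset.sum_nonneg fun _ _ => sq_nonneg _)) fun x hx => ?_
        rw [hχ.one x hx, one_mul]
    _ = _ := e
    _ ≤ ∫ x in closedBall (0:R3) b, (K + 1) * (M x ^ 2 + lap M x ^ 2) := by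
        refine cc_le c2 (by fun_prop) (fun x hx => ?_) (fun x hx => ?_)
        · have h' : x ∉ tsupport χ := fun h => hx (hχ.supp h)
          rw [lap_off h', image_eq_zero_of_notMem_tsupport h']; ring
        · have h1 := abs_le.1 (hK x)
          have h3 : - lap M x * (χ x * M x) ≤ M x ^ 2 + lap M x ^ 2 := by
            have := hχ.nn x
            have := hχ.le x
            nlinarith [mul_nonneg (hχ.nn x) (sq_nonneg (lap M x + M x)), sq_nonneg (M x), sq_nonneg (lap M x)]
          nlinarith [sq_nonneg (M x), sq_nonneg (lap M x), mul_le_mul_of_nonneg_left h1.2 (sq_nonneg (M x)), mul_nonneg hK0 (sq_nonneg (M x)), mul_nonneg hK0 (sq_nonneg (lap M x))]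
    _ = _ := by rw [integral_const_mul]

lemma lap_pd {M : R3 → ℝ} (hM : Sm M) (j : Fin 3) (x : R3) : lap (pd M j) x = pd (lap M) j x := by
  unfold lap
  rw [pd_sum (fun i => (hM.pd i).pd i)]
  refine Finset.sum_congr rfl fun i _ => ?_
  have : pd (pd M j) i = pd (pd M i) j := funext fun y => pd_comm hM j i y
  rw [this, pd_comm (hM.pd i)]

lemma hess {a b : ℝ} (ha : 0 < a) (hab : a < b) : ∃ C, 0 ≤ C ∧ ∀ M : R3 → ℝ, Sm M →
    ∫ x in closedBall (0:R3) a, ∑ j, ∑ k, pd (pd M j) k x ^ 2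
      ≤ C * ∫ x in closedBall (0:R3) b, ((∑ j, pd M j x ^ 2) + lap M x ^ 2) := by
  obtain ⟨χ, hχ⟩ := exists_cut ha hab
  obtain ⟨K, hK0, hK⟩ := bdd_cc hχ.sm.lap.cont (by
    have : HasCompactSupport (fun x => ∑ j, pd (pd χ j) j x) := by
      simp only [Fin.sum_univ_three]
      exact ((hcs_pd (hcs_pd hχ.hcs 0) 0).add (hcs_pd (hcs_pd hχ.hcs 1) 1)).add
        (hcs_pd (hcs_pd hχ.hcs 2) 2)
    exact this)
  have hL' : ∀ j, ∃ C, 0 ≤ C ∧ ∀ x, |pd χ j x| ≤ C := fun j =>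
    bdd_cc (hχ.sm.pd j).cont (hcs_pd hχ.hcs j)
  choose L hL0 hL using hL'
  refine ⟨K + 1 + 2 * ∑ j, L j, by have := Finset.sum_nonneg (fun j (_ : j ∈ Finset.univ) => hL0 j); positivity, fun M hM => ?_⟩
  have hN := Nul.sum (fun j => (lemA (b := fun _ _ => 0) (hM.pd j) hχ.sm hχ.hcs (fun _ => Sm.cst 0)
    (fun x => by simp [pd_const])).add
      (Nul.pd (hM.lap.mul (hχ.sm.mul (hM.pd j))) hχ.hcs.mul_right.mul_left j))
  have cM := hM.cont
  have cL := hM.lap.cont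
  have cχ := hχ.sm.cont
  have cLχ := hχ.sm.lap.cont
  have cPχ : ∀ j, Continuous (pd χ j) := fun j => (hχ.sm.pd j).cont
  have cP : ∀ j, Continuous (pd M j) := fun j => (hM.pd j).cont
  have cPP : ∀ j k, Continuous (pd (pd M j) k) := fun j k => ((hM.pd j).pd k).cont
  have c1 : Continuous (fun x => χ x * ∑ j, ∑ k, pd (pd M j) k x ^ 2) := by fun_prop
  have s1 : HasCompactSupport (fun x => χ x * ∑ j, ∑ k, pd (pd M j) k x ^ 2) := hχ.hcs.mul_right
  have c2 : Continuous (fun x => 1/2 * ((∑ j, pd M j x ^ 2) * lap χ x) + χ x * lap M x ^ 2 +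
      ∑ j, lap M x * (pd χ j x * pd M j x)) := by fun_prop
  have e : ∫ x, χ x * ∑ j, ∑ k, pd (pd M j) k x ^ 2 =
      ∫ x, (1/2 * ((∑ j, pd M j x ^ 2) * lap χ x) + χ x * lap M x ^ 2 +
      ∑ j, lap M x * (pd χ j x * pd M j x)) := by
    have h2 := integral_add (int_cc hN.c hN.s) (int_cc c1 s1)
    rw [hN.i, zero_add] at h2
    rw [← h2]
    congr 1
    ext x
    simp only [lap_pd hM, pd_mul hM.lap (hχ.sm.mul (hM.pd _)), pd_mul hχ.sm (hM.pd _)]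
    have hl : lap M x = ∑ j, pd (pd M j) j x := rfl
    simp only [Fin.sum_univ_three] at hl ⊢
    linear_combination (-(χ x * lap M x)) * hl
  calc ∫ x in closedBall (0:R3) a, ∑ j, ∑ k, pd (pd M j) k x ^ 2
      ≤ ∫ x, χ x * ∑ j, ∑ k, pd (pd M j) k x ^ 2 := by
        refine ball_le (by fun_prop) c1 s1
          (fun x => mul_nonneg (hχ.nn x) (Finset.sum_nonneg fun _ _ => Finset.sum_nonneg fun _ _ => sq_nonneg _)) fun x hx => ?_
        rw [hχ.one x hx, one_mul]
    _ = _ := e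
    _ ≤ ∫ x in closedBall (0:R3) b, (K + 1 + 2 * ∑ j, L j) * ((∑ j, pd M j x ^ 2) + lap M x ^ 2) := by
        refine cc_le c2 (by fun_prop) (fun x hx => ?_) (fun x hx => ?_)
        · have h' : x ∉ tsupport χ := fun h => hx (hχ.supp h)
          rw [lap_off h', image_eq_zero_of_notMem_tsupport h']
          simp [pd_off _ h']
        · have h1 := (abs_le.1 (hK x)).2
          have hS : 0 ≤ ∑ j, pd M j x ^ 2 := Finset.sum_nonneg fun _ _ => sq_nonneg _
          set S := ∑ j, pd M j x ^ 2 with hSd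
          have a1 : 1/2 * (S * lap χ x) ≤ K * S := by nlinarith
          have a2 : χ x * lap M x ^ 2 ≤ lap M x ^ 2 := by
            have := hχ.le x; nlinarith [sq_nonneg (lap M x)]
          have a3 : ∑ j, lap M x * (pd χ j x * pd M j x) ≤ (∑ j, L j) * (S + lap M x ^ 2) := by
            rw [Finset.sum_mul]
            refine Finset.sum_le_sum fun j _ => ?_
            have b1 : pd M j x ^ 2 ≤ S := Finset.single_le_sum (f := fun j => pd M j x ^ 2) (fun _ _ => sq_nonneg _) (Finset.mem_univ j)
            have b2 : lap M x * (pd χ j x * pd M j x) ≤ |pd χ j x| * |lap M x * pd M j x| := by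
              rw [← abs_mul]; refine le_trans (le_of_eq (by ring)) (le_abs_self _)
            have b3 : |lap M x * pd M j x| ≤ pd M j x ^ 2 + lap M x ^ 2 := by
              rw [abs_le]; constructor <;> nlinarith [sq_nonneg (lap M x + pd M j x), sq_nonneg (lap M x - pd M j x)]
            calc _ ≤ _ := b2
              _ ≤ L j * (pd M j x ^ 2 + lap M x ^ 2) := mul_le_mul (hL j x) b3 (abs_nonneg _) (hL0 j)
              _ ≤ _ := mul_le_mul_of_nonneg_left (by linarith) (hL0 j)
          have a4 : 0 ≤ (∑ j, L j) * (S + lap M x ^ 2) :=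
            mul_nonneg (Finset.sum_nonneg fun j _ => hL0 j) (by positivity)
          nlinarith [mul_nonneg hK0 (sq_nonneg (lap M x))]
    _ = _ := by rw [integral_const_mul]

section Param
variable {T : Type*} [TopologicalSpace T] [MeasurableSpace T] [OpensMeasurableSpace T]
  [T2Space T]

def PI (μ : Measure T) (S : Set T) (K a : T → ℝ) (γ : T → R3) (g : R3 → ℝ) (x : R3) : ℝ :=
  ∫ t in S, K t * g (a t • x + γ t) ∂μ

lemma PI_hasFDerivAt (μ : Measure T) [IsFiniteMeasureOnCompacts μ] {S : Set T} (hS : IsCompact S)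
    {K a : T → ℝ} {γ : T → R3} (hK : Continuous K) (ha : Continuous a) (hγ : Continuous γ)
    {g : R3 → ℝ} (hg : Sm g) (x : R3) :
    HasFDerivAt (PI μ S K a γ g)
      (∫ t in S, (K t * a t) • fderiv ℝ g (a t • x + γ t) ∂μ) x := by
  have hg' : Continuous (fderiv ℝ g) := ContDiff.continuous_fderiv hg (by simp)
  have cg := hg.cont
  have hc : Continuous (fun z : R3 × T => (K z.2 * a z.2) • fderiv ℝ g (a z.2 • z.1 + γ z.2)) := by
    fun_prop
  obtain ⟨C, hC⟩ := ((isCompact_closedBall x 1).prod hS).exists_bound_of_continuousOn hc.continuousOn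
  have hSm : MeasurableSet S := hS.isClosed.measurableSet
  refine hasFDerivAt_integral_of_dominated_of_fderiv_le (s := ball x 1) (bound := fun _ => C)
    (F' := fun x t => (K t * a t) • fderiv ℝ g (a t • x + γ t)) (ball_mem_nhds x one_pos) ?_ ?_ ?_ ?_ ?_ ?_
  · refine Filter.Eventually.of_forall fun y => ?_
    have : Continuous (fun t => K t * g (a t • y + γ t)) := by fun_prop
    exact this.aestronglyMeasurable
  · have : Continuous (fun t => K t * g (a t • x + γ t)) := by fun_prop
    exact this.continuousOn.integrableOn_compact hS
  · have : Continuous (fun t => (K t * a t) • fderiv ℝ g (a t • x + γ t)) := by fun_prop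
    exact this.aestronglyMeasurable
  · refine (ae_restrict_iff' hSm).2 (Filter.Eventually.of_forall fun t ht y hy => ?_)
    exact hC (y, t) ⟨ball_subset_closedBall hy, ht⟩
  · have : IntegrableOn (fun _ : T => C) S μ := continuous_const.continuousOn.integrableOn_compact hS
    exact this
  · refine Filter.Eventually.of_forall fun t y _ => ?_
    have h1 : HasFDerivAt (fun y : R3 => a t • y + γ t) (a t • ContinuousLinearMap.id ℝ R3) y :=
      ((hasFDerivAt_id y).const_smul (a t)).add_const _
    have h2 := ((hg.diff (a t • y + γ t)).hasFDerivAt.comp y h1).const_mul (K t)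
    have h3 : (K t * a t) • fderiv ℝ g (a t • y + γ t) =
        K t • (fderiv ℝ g (a t • y + γ t)).comp (a t • ContinuousLinearMap.id ℝ R3) := by
      ext v
      simp [mul_assoc]
    rw [h3]
    exact h2

lemma PI_fderiv_apply (μ : Measure T) [IsFiniteMeasureOnCompacts μ] {S : Set T} (hS : IsCompact S)
    {K a : T → ℝ} {γ : T → R3} (hK : Continuous K) (ha : Continuous a) (hγ : Continuous γ)
    {g : R3 → ℝ} (hg : Sm g) (x v : R3) :
    fderiv ℝ (PI μ S K a γ g) x v = PI μ S (fun t => K t * a t) a γ (fun z => fderiv ℝ g z v) x := by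
  have hg' : Continuous (fderiv ℝ g) := ContDiff.continuous_fderiv hg (by simp)
  rw [(PI_hasFDerivAt μ hS hK ha hγ hg x).fderiv, ContinuousLinearMap.integral_apply]
  · rfl
  · have : Continuous (fun t => (K t * a t) • fderiv ℝ g (a t • x + γ t)) := by fun_prop
    exact this.continuousOn.integrableOn_compact hS

lemma PI_pd (μ : Measure T) [IsFiniteMeasureOnCompacts μ] {S : Set T} (hS : IsCompact S)
    {K a : T → ℝ} {γ : T → R3} (hK : Continuous K) (ha : Continuous a) (hγ : Continuous γ)
    {g : R3 → ℝ} (hg : Sm g) (j : Fin 3) (x : R3) :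
    pd (PI μ S K a γ g) j x = PI μ S (fun t => K t * a t) a γ (pd g j) x :=
  PI_fderiv_apply μ hS hK ha hγ hg x _

lemma PI_sm (μ : Measure T) [IsFiniteMeasureOnCompacts μ] {S : Set T} (hS : IsCompact S)
    {K a : T → ℝ} {γ : T → R3} (hK : Continuous K) (ha : Continuous a) (hγ : Continuous γ)
    {g : R3 → ℝ} (hg : Sm g) : Sm (PI μ S K a γ g) := by
  have key : ∀ n : ℕ, ∀ K : T → ℝ, Continuous K → ∀ g : R3 → ℝ, Sm g →
      ContDiff ℝ n (PI μ S K a γ g) := by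
    intro n
    induction n with
    | zero =>
      intro K hK g hg
      have : Continuous (PI μ S K a γ g) := continuous_iff_continuousAt.2 fun x =>
        (PI_hasFDerivAt μ hS hK ha hγ hg x).continuousAt
      exact_mod_cast contDiff_zero.2 this
    | succ n ih =>
      intro K hK g hg
      have h := contDiff_succ_iff_fderiv (𝕜 := ℝ) (f := PI μ S K a γ g) (n := (n : WithTop ℕ∞))
      push_cast
      rw [h]
      refine ⟨fun x => (PI_hasFDerivAt μ hS hK ha hγ hg x).differentiableAt, by simp, ?_⟩
      rw [contDiff_clm_apply_iff]
      intro v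
      have : (fun x => fderiv ℝ (PI μ S K a γ g) x v) =
          PI μ S (fun t => K t * a t) a γ (fun z => fderiv ℝ g z v) :=
        funext fun x => PI_fderiv_apply μ hS hK ha hγ hg x v
      rw [this]
      refine ih _ (hK.mul ha) _ ?_
      have h2 : ContDiff ℝ (⊤ : ℕ∞) (fderiv ℝ g) := by
        apply ContDiff.fderiv_right (n := ((⊤ : ℕ∞) : WithTop ℕ∞)) hg
        exact le_of_eq rfl
      exact h2.clm_apply contDiff_const
  exact contDiff_infty.2 fun n => key n K hK g hg

end Param

structure Ker (ζ η : R3 → ℝ) : Prop where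
  sz : Sm ζ
  se : Sm η
  tz : tsupport ζ ⊆ closedBall (0:R3) 1
  te : tsupport η ⊆ closedBall (0:R3) 1
  pdz : ∀ j y, pd ζ j y = y j * η y
  ie : ∫ y, η y = 1

lemma tsupp_of {f : R3 → ℝ} (h : ∀ x, 1 < ‖x‖ → f x = 0) : tsupport f ⊆ closedBall (0:R3) 1 := by
  refine closure_minimal (fun x hx => ?_) isClosed_closedBall
  by_contra h'
  simp only [mem_closedBall, dist_zero_right, not_le] at h'
  exact hx (h x h')

lemma hcs_of {f : R3 → ℝ} {b : ℝ} (h : tsupport f ⊆ closedBall (0:R3) b) : HasCompactSupport f :=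
  (isCompact_closedBall (0:R3) b).of_isClosed_subset (isClosed_tsupport _) h

lemma exists_ker : ∃ ζ η, Ker ζ η := by
  have hST : ContDiff ℝ (⊤ : ℕ∞) Real.smoothTransition := Real.smoothTransition.contDiff
  have hdST : ContDiff ℝ (⊤ : ℕ∞) (deriv Real.smoothTransition) := by
    have := (contDiff_infty_iff_deriv (𝕜 := ℝ) (f := Real.smoothTransition)).1 hST
    exact this.2
  have hn : ContDiff ℝ (⊤ : ℕ∞) (fun y : R3 => 1 - ‖y‖ ^ 2) := contDiff_const.sub (contDiff_norm_sq ℝ)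
  let z : R3 → ℝ := fun y => Real.smoothTransition (1 - ‖y‖ ^ 2)
  let e : R3 → ℝ := fun y => 2 * deriv Real.smoothTransition (1 - ‖y‖ ^ 2)
  have sz : Sm z := hST.comp hn
  have se : Sm e := (Sm.cst 2).mul (hdST.comp hn)
  have tz : tsupport z ⊆ closedBall (0:R3) 1 := tsupp_of fun x hx => by
    apply Real.smoothTransition.zero_of_nonpos
    nlinarith
  have te : tsupport e ⊆ closedBall (0:R3) 1 := tsupp_of fun x hx => by
    have h1 : (1:ℝ) - ‖x‖^2 < 0 := by nlinarith
    have : Real.smoothTransition =ᶠ[nhds (1 - ‖x‖^2)] fun _ => 0 := by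
      filter_upwards [gt_mem_nhds h1] with t ht
      exact Real.smoothTransition.zero_of_nonpos ht.le
    simp [e, this.deriv_eq]
  have he : 0 < ∫ y, e y := by
    obtain ⟨t, ht, h⟩ := exists_deriv_eq_slope Real.smoothTransition (zero_lt_one)
      hST.continuous.continuousOn (hST.differentiable (by simp)).differentiableOn
    rw [Real.smoothTransition.one, Real.smoothTransition.zero] at h
    refine se.cont.integral_pos_of_hasCompactSupport_nonneg_nonzero (hcs_of te)
      (fun y => mul_nonneg zero_le_two Real.smoothTransition.monotone.deriv_nonneg)
      (x := EuclideanSpace.single 0 (Real.sqrt (1 - t))) ?_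
    have h1 : 0 ≤ 1 - t := by linarith [ht.2]
    simp [e, Real.sq_sqrt h1, h]
  have pz : ∀ j y, pd z j y = - (y j * e y) := by
    intro j y
    have h1 : HasFDerivAt (fun y : R3 => 1 - ‖y‖ ^ 2) (-(2 • innerSL ℝ y)) y := by
      simpa using (hasStrictFDerivAt_norm_sq y).hasFDerivAt.const_sub 1
    have h2 : HasDerivAt Real.smoothTransition (deriv Real.smoothTransition (1 - ‖y‖^2)) (1 - ‖y‖^2) :=
      ((hST.differentiable (by simp)) _).hasDerivAt
    have h3 := h2.comp_hasFDerivAt y h1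
    have h4 : fderiv ℝ z y = _ := h3.fderiv
    unfold pd
    rw [h4]
    simp [e, EuclideanSpace.inner_single_right]
    ring
  set c := ∫ y, e y with hc
  refine ⟨fun y => -(1/c) * z y, fun y => (1/c) * e y, (Sm.cst _).mul sz, (Sm.cst _).mul se,
    tsupp_of fun x hx => ?_, tsupp_of fun x hx => ?_, fun j y => ?_, ?_⟩
  · have : x ∉ tsupport z := fun h => by have := tz h; simp at this; linarith
    simp [image_eq_zero_of_notMem_tsupport this]
  · have : x ∉ tsupport e := fun h => by have := te h; simp at this; linarith
    simp [image_eq_zero_of_notMem_tsupport this]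
  · rw [pd_cmul sz, pz]; ring
  · rw [integral_const_mul, ← hc]; field_simp

lemma fderiv_eq_sum {f : R3 → ℝ} (z y : R3) : fderiv ℝ f z y = ∑ j, y j * pd f j z := by
  conv_lhs => rw [← (EuclideanSpace.basisFun (Fin 3) ℝ).sum_repr y]
  simp [pd]

lemma pd_affine {f : R3 → ℝ} (hf : Sm f) (c : ℝ) (x : R3) (j : Fin 3) (y : R3) :
    pd (fun y => f (x + c • y)) j y = c * pd f j (x + c • y) := by
  unfold pd
  have h : HasFDerivAt (fun y : R3 => f (x + c • y))
      ((fderiv ℝ f (x + c • y)).comp (c • ContinuousLinearMap.id ℝ R3)) y :=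
    HasFDerivAt.comp y (hf.diff (x + c • y)).hasFDerivAt (((hasFDerivAt_id y).const_smul c).const_add x)
  rw [h.fderiv]; simp

lemma Sm.affine {f : R3 → ℝ} (hf : Sm f) (c : ℝ) (x : R3) : Sm (fun y => f (x + c • y)) :=
  ContDiff.comp hf (contDiff_const.add (contDiff_const_smul c))

lemma hasDerivAt_line {f : R3 → ℝ} (hf : Sm f) (x y : R3) (s : ℝ) :
    HasDerivAt (fun s : ℝ => f (x + s • y)) (∑ j, y j * pd f j (x + s • y)) s := by
  rw [← fderiv_eq_sum]
  have h1 : HasDerivAt (fun s : ℝ => x + s • y) y s := by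
    simpa using ((hasDerivAt_id s).smul_const y).const_add x
  exact (hf.diff (x + s • y)).hasFDerivAt.comp_hasDerivAt s h1

def QQ : Set (ℝ × R3) := Set.Icc (0:ℝ) 1 ×ˢ closedBall (0:R3) 1

lemma QQ_compact : IsCompact QQ := isCompact_Icc.prod (isCompact_closedBall _ _)

def MM (ζ : R3 → ℝ) (f : R3 → ℝ) : R3 → ℝ :=
  PI volume QQ (fun z => z.1 * ζ z.2) (fun _ => 1) (fun z => z.1 • z.2) f

def VV (η : R3 → ℝ) (f : R3 → ℝ) : R3 → ℝ :=
  PI volume (closedBall (0:R3) 1) η (fun _ => 1) (fun y => y) f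

section MV
variable {ζ η f : R3 → ℝ}

lemma MM_sm (h : Ker ζ η) (hf : Sm f) : Sm (MM ζ f) :=
  PI_sm _ QQ_compact (by have := h.sz.cont; fun_prop) (by fun_prop) (by fun_prop) hf

lemma MM_pd (h : Ker ζ η) (hf : Sm f) (j : Fin 3) : pd (MM ζ f) j = MM ζ (pd f j) := by
  ext x
  unfold MM
  rw [PI_pd _ QQ_compact (by have := h.sz.cont; fun_prop) (by fun_prop) (by fun_prop) hf]
  simp

lemma VV_sm (h : Ker ζ η) (hf : Sm f) : Sm (VV η f) :=
  PI_sm _ (isCompact_closedBall _ _) (h.se.cont) (by fun_prop) (by fun_prop) hf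

lemma VV_pd (h : Ker ζ η) (hf : Sm f) (j : Fin 3) : pd (VV η f) j = VV η (pd f j) := by
  ext x
  unfold VV
  rw [PI_pd _ (isCompact_closedBall _ _) (h.se.cont) (by fun_prop) (by fun_prop) hf]
  simp

lemma MM_sum (h : Ker ζ η) {g : Fin 3 → R3 → ℝ} (hg : ∀ i, Sm (g i)) (x : R3) :
    ∑ i, MM ζ (g i) x = MM ζ (fun y => ∑ i, g i y) x := by
  unfold MM PI
  rw [← integral_finsetSum]
  · simp [Finset.mul_sum]
  · intro i _
    have := h.sz.cont
    have := (hg i).cont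
    have : Continuous (fun z : ℝ × R3 => z.1 * ζ z.2 * g i ((1:ℝ) • x + z.1 • z.2)) := by fun_prop
    exact this.continuousOn.integrableOn_compact QQ_compact

lemma VV_sum (h : Ker ζ η) {g : Fin 3 → R3 → ℝ} (hg : ∀ i, Sm (g i)) (x : R3) :
    ∑ i, VV η (g i) x = VV η (fun y => ∑ i, g i y) x := by
  unfold VV PI
  rw [← integral_finsetSum]
  · simp [Finset.mul_sum]
  · intro i _
    have := h.se.cont
    have := (hg i).cont
    have : Continuous (fun z : R3 => η z * g i ((1:ℝ) • x + z)) := by fun_prop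
    exact this.continuousOn.integrableOn_compact (isCompact_closedBall _ _)

lemma MM_lap (h : Ker ζ η) (hf : Sm f) (x : R3) : lap (MM ζ f) x = f x - VV η f x := by
  have cz := h.sz.cont
  have ce := h.se.cont
  have cf := hf.cont
  have cl := hf.lap.cont
  have cp : ∀ j, Continuous (pd f j) := fun j => (hf.pd j).cont
  have e1 : lap (MM ζ f) x = MM ζ (lap f) x := by
    unfold lap
    rw [← MM_sum h (fun i => (hf.pd i).pd i)]
    refine Finset.sum_congr rfl fun j _ => ?_
    rw [MM_pd h hf, MM_pd h (hf.pd j)]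
  have e2 : MM ζ (lap f) x = ∫ s in Set.Icc (0:ℝ) 1, ∫ y in closedBall (0:R3) 1,
      s * ζ y * lap f (x + s • y) := by
    unfold MM PI QQ
    rw [Measure.volume_eq_prod, setIntegral_prod]
    · simp
    · have : Continuous (fun z : ℝ × R3 => z.1 * ζ z.2 * lap f ((1:ℝ) • x + z.1 • z.2)) := by fun_prop
      exact this.continuousOn.integrableOn_compact QQ_compact
  have e3 : ∀ s : ℝ, ∫ y in closedBall (0:R3) 1, s * ζ y * lap f (x + s • y) =
      ∫ y in closedBall (0:R3) 1, -(η y * ∑ j, y j * pd f j (x + s • y)) := by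
    intro s
    have hN := Nul.div (f := fun j y => ζ y * pd f j (x + s • y))
      (fun j => h.sz.mul ((hf.pd j).affine s x)) (fun j => (hcs_of h.tz).mul_right)
    have : ∀ y, (∑ j, pd (fun y => ζ y * pd f j (x + s • y)) j y) =
        s * ζ y * lap f (x + s • y) - -(η y * ∑ j, y j * pd f j (x + s • y)) := by
      intro y
      simp only [pd_mul h.sz ((hf.pd _).affine s x), pd_affine (hf.pd _), h.pdz, lap,
        Fin.sum_univ_three]
      ring
    have hi := hN.i
    simp only [this] at hi
    have c1 : Continuous (fun y => s * ζ y * lap f (x + s • y)) := by fun_prop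
    have c2 : Continuous (fun y : R3 => -(η y * ∑ j, y j * pd f j (x + s • y))) := by fun_prop
    rw [← setIntegral_eq_integral_of_forall_compl_eq_zero (s := closedBall (0:R3) 1),
      integral_sub (cint _ c1 1) (cint _ c2 1)] at hi
    · linarith
    · intro y hy
      rw [image_eq_zero_of_notMem_tsupport (fun h' => hy (h.tz h')),
        image_eq_zero_of_notMem_tsupport (fun h' => hy (h.te h'))]
      simp
  have e4 : ∫ s in Set.Icc (0:ℝ) 1, ∫ y in closedBall (0:R3) 1,
      -(η y * ∑ j, y j * pd f j (x + s • y)) = ∫ y in closedBall (0:R3) 1,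
      ∫ s in Set.Icc (0:ℝ) 1, -(η y * ∑ j, y j * pd f j (x + s • y)) := by
    refine integral_integral_swap ?_
    have c : Continuous (fun z : ℝ × R3 => -(η z.2 * ∑ j, z.2 j * pd f j (x + z.1 • z.2))) := by
      fun_prop
    have := c.continuousOn.integrableOn_compact QQ_compact (μ := volume)
    unfold IntegrableOn QQ at this
    rw [Measure.volume_eq_prod, ← Measure.prod_restrict] at this
    exact this
  have e5 : ∀ y : R3, ∫ s in Set.Icc (0:ℝ) 1, -(η y * ∑ j, y j * pd f j (x + s • y)) =
      η y * f x - η y * f ((1:ℝ) • x + y) := by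
    intro y
    rw [integral_neg, integral_const_mul, integral_Icc_eq_integral_Ioc,
      ← intervalIntegral.integral_of_le zero_le_one,
      intervalIntegral.integral_eq_sub_of_hasDerivAt (f := fun s : ℝ => f (x + s • y))
        (fun s _ => hasDerivAt_line hf x y s)]
    · simp; ring
    · apply Continuous.intervalIntegrable
      fun_prop
  rw [e1, e2]
  simp only [e3]
  rw [e4]
  simp only [e5]
  rw [integral_sub]
  · rw [integral_mul_const, setIntegral_eq_integral_of_forall_compl_eq_zero, h.ie, one_mul]
    · rfl
    · intro y hy
      exact image_eq_zero_of_notMem_tsupport (fun h' => hy (h.te h'))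
  · exact cint _ (by fun_prop) 1
  · exact cint _ (by fun_prop) 1

end MV

lemma cs_int {T : Type*} [MeasurableSpace T] (μ : Measure T) {a b : T → ℝ}
    (ha : Integrable (fun t => a t ^ 2) μ) (hb : Integrable (fun t => b t ^ 2) μ)
    (hab : Integrable (fun t => a t * b t) μ) :
    (∫ t, a t * b t ∂μ) ^ 2 ≤ (∫ t, a t ^ 2 ∂μ) * ∫ t, b t ^ 2 ∂μ := by
  have h : ∀ s : ℝ, 0 ≤ (∫ t, a t ^ 2 ∂μ) * (s * s) + (2 * ∫ t, a t * b t ∂μ) * s + ∫ t, b t ^ 2 ∂μ := by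
    intro s
    have e : ∫ t, (s * a t + b t) ^ 2 ∂μ =
        (∫ t, a t ^ 2 ∂μ) * (s * s) + (2 * ∫ t, a t * b t ∂μ) * s + ∫ t, b t ^ 2 ∂μ := by
      have : ∀ t, (s * a t + b t) ^ 2 = (s * s) * a t ^ 2 + (2 * s) * (a t * b t) + b t ^ 2 := by
        intro t; ring
      simp only [this]
      have h12 : Integrable (fun t => (s*s) * a t^2 + (2*s) * (a t * b t)) μ :=
        (ha.const_mul _).add (hab.const_mul _)
      rw [integral_add h12 hb,
        integral_add (ha.const_mul _) (hab.const_mul _), integral_const_mul, integral_const_mul]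
      ring
    rw [← e]
    exact integral_nonneg fun t => sq_nonneg _
  have := discrim_le_zero h
  unfold discrim at this
  nlinarith

lemma shift_le {g : R3 → ℝ} (hg : Continuous g) (h0 : ∀ x, 0 ≤ g x) {r c : ℝ} {y : R3} (hy : ‖y‖ ≤ c) :
    ∫ x in closedBall (0:R3) r, g (x + y) ≤ ∫ x in closedBall (0:R3) (r + c), g x := by
  have h1 := (measurePreserving_add_right (volume : Measure R3) y).setIntegral_preimage_emb
    (measurableEmbedding_addRight y) g (closedBall y r)
  have h2 : (fun x : R3 => x + y) ⁻¹' closedBall y r = closedBall 0 r := by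
    ext x; simp [dist_eq_norm]
  rw [h2] at h1
  rw [h1]
  refine setIntegral_mono_set (cint g hg _) (Filter.Eventually.of_forall h0) ?_
  apply LE.le.eventuallyLE
  intro x hx
  simp only [mem_closedBall, dist_eq_norm, sub_zero] at *
  calc ‖x‖ = ‖(x - y) + y‖ := by simp
    _ ≤ r + c := (norm_add_le _ _).trans (add_le_add hx hy)

lemma VV_sup {κ f : R3 → ℝ} (hκ : Continuous κ) (hf : Continuous f) {x : R3} (hx : ‖x‖ ≤ 3) :
    VV κ f x ^ 2 ≤ (∫ y in closedBall (0:R3) 1, κ y ^ 2) * ∫ y in closedBall (0:R3) 4, f y ^ 2 := by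
  unfold VV PI
  have c1 : Continuous (fun y : R3 => f ((1:ℝ) • x + y) ^ 2) := by fun_prop
  have c2 : Continuous (fun y : R3 => κ y * f ((1:ℝ) • x + y)) := by fun_prop
  refine (cs_int _ (cint _ (by fun_prop) 1) (cint _ c1 1) (cint _ c2 1)).trans ?_
  refine mul_le_mul_of_nonneg_left ?_ (integral_nonneg fun t => sq_nonneg _)
  have := shift_le (g := fun y => f y ^ 2) (by fun_prop) (fun y => sq_nonneg _) (r := 1) hx
  norm_num at this
  simpa [add_comm] using this

lemma VV_ibp {ζ η f : R3 → ℝ} (h : Ker ζ η) (hf : Sm f) (j : Fin 3) (x : R3) :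
    pd (VV η f) j x = - VV (pd η j) f x := by
  rw [VV_pd h hf]
  have hN := Nul.pd (h.se.mul (hf.affine 1 x)) (hcs_of h.te).mul_right j
  have hi := hN.i
  have ce := h.se.cont
  have cf := hf.cont
  have cpe := (h.se.pd j).cont
  have cpf := (hf.pd j).cont
  simp only [pd_mul h.se (hf.affine 1 x), pd_affine hf] at hi
  rw [← setIntegral_eq_integral_of_forall_compl_eq_zero (s := closedBall (0:R3) 1), integral_add] at hi
  · unfold VV PI
    simp only [one_smul, one_mul] at *
    linarith
  · exact cint _ (by fun_prop) 1
  · exact cint _ (by fun_prop) 1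
  · intro y hy
    rw [image_eq_zero_of_notMem_tsupport (fun h' => hy (h.te h')), pd_off j (fun h' => hy (h.te h'))]
    simp

lemma MM_L2 {ζ : R3 → ℝ} (hζ : Continuous ζ) : ∃ C, 0 ≤ C ∧ ∀ f : R3 → ℝ, Continuous f →
    Continuous (MM ζ f) →
    ∫ x in closedBall (0:R3) 3, MM ζ f x ^ 2 ≤ C * ∫ y in closedBall (0:R3) 4, f y ^ 2 := by
  set C1 := ∫ z in QQ, (z.1 * ζ z.2) ^ 2 with hC1
  have hC1n : 0 ≤ C1 := integral_nonneg fun t => sq_nonneg _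
  refine ⟨C1 * (volume : Measure (ℝ × R3)).real QQ, by positivity, fun f hf hM => ?_⟩
  have hfin : (volume : Measure (ℝ × R3)) QQ < ⊤ := QQ_compact.measure_lt_top
  have cF : Continuous (fun w : R3 × (ℝ × R3) => f (w.1 + w.2.1 • w.2.2) ^ 2) := by fun_prop
  have hint : IntegrableOn (fun w : R3 × (ℝ × R3) => f (w.1 + w.2.1 • w.2.2) ^ 2)
      (closedBall (0:R3) 3 ×ˢ QQ) :=
    cF.continuousOn.integrableOn_compact ((isCompact_closedBall _ _).prod QQ_compact)
  have hint' : Integrable (fun w : R3 × (ℝ × R3) => f (w.1 + w.2.1 • w.2.2) ^ 2)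
      ((volume.restrict (closedBall (0:R3) 3)).prod (volume.restrict QQ)) := by
    unfold IntegrableOn at hint
    rwa [Measure.volume_eq_prod, ← Measure.prod_restrict] at hint
  have p1 : ∀ x, MM ζ f x ^ 2 ≤ C1 * ∫ z in QQ, f (x + z.1 • z.2) ^ 2 := by
    intro x
    unfold MM PI
    have ca : Continuous (fun z : ℝ × R3 => (z.1 * ζ z.2) ^ 2) := by fun_prop
    have cb : Continuous (fun z : ℝ × R3 => f ((1:ℝ) • x + z.1 • z.2) ^ 2) := by fun_prop
    have cc : Continuous (fun z : ℝ × R3 => z.1 * ζ z.2 * f ((1:ℝ) • x + z.1 • z.2)) := by fun_prop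
    have := cs_int (volume.restrict QQ) (ca.continuousOn.integrableOn_compact QQ_compact)
      (cb.continuousOn.integrableOn_compact QQ_compact) (cc.continuousOn.integrableOn_compact QQ_compact)
    simpa using this
  calc ∫ x in closedBall (0:R3) 3, MM ζ f x ^ 2
      ≤ ∫ x in closedBall (0:R3) 3, C1 * ∫ z in QQ, f (x + z.1 • z.2) ^ 2 := by
        refine integral_mono (cint _ (by fun_prop) 3) ?_ p1
        exact hint'.integral_prod_left.const_mul C1
    _ = C1 * ∫ z in QQ, ∫ x in closedBall (0:R3) 3, f (x + z.1 • z.2) ^ 2 := by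
        rw [integral_const_mul, integral_integral_swap hint']
    _ ≤ C1 * ∫ z in QQ, ∫ y in closedBall (0:R3) 4, f y ^ 2 := by
        refine mul_le_mul_of_nonneg_left ?_ hC1n
        refine setIntegral_mono_on hint'.integral_prod_right (integrableOn_const hfin.ne)
          QQ_compact.isClosed.measurableSet fun z hz => ?_
        have hz1 : ‖z.1 • z.2‖ ≤ 1 := by
          have h1 := hz.1; have h2 := hz.2
          simp only [mem_closedBall, dist_zero_right] at h2
          rw [norm_smul, Real.norm_eq_abs, abs_of_nonneg h1.1]
          exact mul_le_one₀ h1.2 (norm_nonneg _) h2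
        have := shift_le (g := fun y => f y ^ 2) (by fun_prop) (fun y => sq_nonneg _) (r := 3) hz1
        norm_num at this
        exact this
    _ = _ := by rw [setIntegral_const, smul_eq_mul]; ring

lemma vol_nn (b : ℝ) : 0 ≤ (volume : Measure R3).real (closedBall (0:R3) b) := measureReal_nonneg

lemma regM {ζ η : R3 → ℝ} (h : Ker ζ η) : ∃ C, 0 ≤ C ∧ ∀ f : R3 → ℝ, Sm f →
    (∫ x in closedBall (0:R3) 2, ∑ k, pd (MM ζ f) k x ^ 2 ≤ C * ∫ y in closedBall (0:R3) 4, f y ^ 2) ∧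
    (∫ x in closedBall (0:R3) 2, ∑ j, ∑ k, pd (pd (MM ζ f) j) k x ^ 2
      ≤ C * ∫ y in closedBall (0:R3) 4, f y ^ 2) := by
  obtain ⟨C1, hC1, H1⟩ := cacc (a := 5/2) (b := 3) (by norm_num) (by norm_num)
  obtain ⟨C2, hC2, H2⟩ := hess (a := 2) (b := 5/2) (by norm_num) (by norm_num)
  obtain ⟨C3, hC3, H3⟩ := MM_L2 h.sz.cont
  set E := (∫ y in closedBall (0:R3) 1, η y ^ 2) * (volume : Measure R3).real (closedBall (0:R3) 3) with hE
  have hE0 : 0 ≤ E := mul_nonneg (integral_nonneg fun t => sq_nonneg _) (vol_nn _)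
  set L := 2 + 2 * E with hL
  refine ⟨C1 * (C3 + L) + C2 * (C1 * (C3 + L) + L), by positivity, fun f hf => ?_⟩
  set S := ∫ y in closedBall (0:R3) 4, f y ^ 2 with hS
  have hS0 : 0 ≤ S := integral_nonneg fun t => sq_nonneg _
  have hM := MM_sm h hf
  have cM := hM.cont
  have cf := hf.cont
  have cV := (VV_sm h hf).cont
  have cL := hM.lap.cont
  have cP : ∀ k, Continuous (pd (MM ζ f) k) := fun k => (hM.pd k).cont
  have hmono : ∀ (g : R3 → ℝ), Continuous g → (∀ x, 0 ≤ g x) → ∀ a b : ℝ, a ≤ b →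
      ∫ x in closedBall (0:R3) a, g x ≤ ∫ x in closedBall (0:R3) b, g x := fun g hg h0 a b hab =>
    setIntegral_mono_set (cint g hg _) (Filter.Eventually.of_forall h0)
      (LE.le.eventuallyLE (closedBall_subset_closedBall hab))
  have lapb : ∫ x in closedBall (0:R3) 3, lap (MM ζ f) x ^ 2 ≤ L * S := by
    have a1 : ∫ x in closedBall (0:R3) 3, lap (MM ζ f) x ^ 2 ≤
        ∫ x in closedBall (0:R3) 3, (2 * f x ^ 2 + 2 * ((∫ y in closedBall (0:R3) 1, η y ^ 2) * S)) := by
      refine setIntegral_mono_on (cint _ (by fun_prop) 3) (cint _ (by fun_prop) 3)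
        measurableSet_closedBall fun x hx => ?_
      have := VV_sup h.se.cont cf (x := x) (by simpa using hx)
      rw [MM_lap h hf]
      nlinarith [sq_nonneg (f x + VV η f x)]
    have a2 := hmono (fun x => f x ^ 2) (by fun_prop) (fun x => sq_nonneg _) 3 4 (by norm_num)
    rw [integral_add (cint _ (by fun_prop) 3) (cint _ (by fun_prop) 3), integral_const_mul,
      setIntegral_const, smul_eq_mul] at a1
    have : E * S = (∫ y in closedBall (0:R3) 1, η y ^ 2) *
      (volume : Measure R3).real (closedBall (0:R3) 3) * S := rfl
    rw [hL]
    nlinarith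
  have b1 : ∫ x in closedBall (0:R3) (5/2), ∑ k, pd (MM ζ f) k x ^ 2 ≤ C1 * (C3 + L) * S := by
    refine (H1 _ hM).trans ?_
    rw [integral_add (cint _ (by fun_prop) 3) (cint _ (by fun_prop) 3), mul_assoc]
    refine mul_le_mul_of_nonneg_left ?_ hC1
    linarith [H3 f cf cM]
  have b2 : ∫ x in closedBall (0:R3) 2, ∑ j, ∑ k, pd (pd (MM ζ f) j) k x ^ 2
      ≤ C2 * (C1 * (C3 + L) + L) * S := by
    refine (H2 _ hM).trans ?_
    rw [integral_add (cint _ (by fun_prop) _) (cint _ (by fun_prop) _), mul_assoc]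
    refine mul_le_mul_of_nonneg_left ?_ hC2
    have := hmono (fun x => lap (MM ζ f) x ^ 2) (by fun_prop) (fun x => sq_nonneg _) (5/2) 3 (by norm_num)
    linarith
  have b3 := hmono (fun x => ∑ k, pd (MM ζ f) k x ^ 2) (by fun_prop)
    (fun x => Finset.sum_nonneg fun _ _ => sq_nonneg _) 2 (5/2) (by norm_num)
  have n1 : 0 ≤ C1 * (C3 + L) * S := by positivity
  have n2 : 0 ≤ C2 * (C1 * (C3 + L) + L) * S := by positivity
  constructor <;> nlinarith

def NN (f : R3 → ℝ) : R3 → ℝ :=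
  PI volume (Set.Icc (0:ℝ) 1) (fun t => t) (fun t => t) (fun _ => (0:R3)) f

lemma NN_sm {f : R3 → ℝ} (hf : Sm f) : Sm (NN f) :=
  PI_sm _ isCompact_Icc (by fun_prop) (by fun_prop) (by fun_prop) hf

lemma NN_pd {f : R3 → ℝ} (hf : Sm f) (j : Fin 3) (x : R3) :
    pd (NN f) j x = ∫ t in Set.Icc (0:ℝ) 1, t * t * pd f j (t • x) := by
  unfold NN
  rw [PI_pd _ isCompact_Icc (by fun_prop) (by fun_prop) (by fun_prop) hf]
  unfold PI
  simp

lemma icc_bound {g : ℝ → ℝ} {m : ℝ} (h : ∀ t ∈ Set.Icc (0:ℝ) 1, |g t| ≤ m) :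
    |∫ t in Set.Icc (0:ℝ) 1, g t| ≤ m := by
  have := norm_setIntegral_le_of_norm_le_const (μ := volume) (s := Set.Icc (0:ℝ) 1) (f := g) (C := m)
    (by simp) h
  simpa using this

lemma NN_bound {f : R3 → ℝ} {m r : ℝ} (hm : ∀ y : R3, ‖y‖ ≤ r → |f y| ≤ m) {x : R3} (hx : ‖x‖ ≤ r) :
    |NN f x| ≤ m := by
  unfold NN PI
  refine icc_bound fun t ht => ?_
  have h1 : ‖t • x‖ ≤ r := by
    rw [norm_smul, Real.norm_eq_abs, abs_of_nonneg ht.1]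
    nlinarith [norm_nonneg x, ht.1, ht.2]
  have h2 := hm _ h1
  rw [add_zero, abs_mul, abs_of_nonneg ht.1]
  nlinarith [abs_nonneg (f (t • x)), ht.1, ht.2]

lemma NNpd_bound {f : R3 → ℝ} (hf : Sm f) (j : Fin 3) {m r : ℝ} (hm : ∀ y : R3, ‖y‖ ≤ r → |pd f j y| ≤ m)
    {x : R3} (hx : ‖x‖ ≤ r) : |pd (NN f) j x| ≤ m := by
  rw [NN_pd hf]
  refine icc_bound fun t ht => ?_
  have h1 : ‖t • x‖ ≤ r := by
    rw [norm_smul, Real.norm_eq_abs, abs_of_nonneg ht.1]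
    nlinarith [norm_nonneg x, ht.1, ht.2]
  have h2 := hm _ h1
  rw [abs_mul, abs_of_nonneg (mul_self_nonneg t)]
  have : t * t ≤ 1 := by nlinarith [ht.1, ht.2]
  nlinarith [abs_nonneg (pd f j (t • x)), mul_self_nonneg t]

lemma NN_ftc {f : R3 → ℝ} (hf : Sm f) (x : R3) :
    2 * NN f x + ∑ i, x i * pd (NN f) i x = f x := by
  have cf := hf.cont
  have cp : ∀ j, Continuous (pd f j) := fun j => (hf.pd j).cont
  have hd : ∀ t : ℝ, HasDerivAt (fun t : ℝ => t ^ 2 * f (t • x))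
      (2 * (t * f (t • x)) + ∑ i, x i * (t * t * pd f i (t • x))) t := by
    intro t
    have h1 := hasDerivAt_line hf 0 x t
    simp only [zero_add] at h1
    have h2 := (hasDerivAt_pow 2 t).mul h1
    refine h2.congr_deriv ?_
    simp only [Fin.sum_univ_three]
    simp
    ring
  have hI : ∫ t in (0:ℝ)..1, (2 * (t * f (t • x)) + ∑ i, x i * (t * t * pd f i (t • x))) =
      f x := by
    rw [intervalIntegral.integral_eq_sub_of_hasDerivAt (fun t _ => hd t)]
    · simp
    · apply Continuous.intervalIntegrable; fun_prop
  rw [← hI]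
  simp only [NN_pd hf]
  unfold NN PI
  simp only [add_zero]
  rw [intervalIntegral.integral_of_le zero_le_one, ← integral_Icc_eq_integral_Ioc]
  have ci : ∀ g : ℝ → ℝ, Continuous g → IntegrableOn g (Set.Icc (0:ℝ) 1) := fun g hg =>
    hg.continuousOn.integrableOn_compact isCompact_Icc
  rw [integral_add (ci _ (by fun_prop)) (ci _ (by fun_prop)), integral_const_mul, integral_finsetSum]
  · simp only [integral_const_mul]
  · intro i _; exact ci _ (by fun_prop)

lemma NN_div {V : Fin 3 → R3 → ℝ} (hV : ∀ i, Sm (V i)) (hd : ∀ x, ∑ i, pd (V i) i x = 0) (x : R3) :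
    ∑ i, pd (NN (V i)) i x = 0 := by
  have ci : ∀ g : ℝ → ℝ, Continuous g → IntegrableOn g (Set.Icc (0:ℝ) 1) := fun g hg =>
    hg.continuousOn.integrableOn_compact isCompact_Icc
  have cp : ∀ i j, Continuous (pd (V i) j) := fun i j => ((hV i).pd j).cont
  simp only [fun i => NN_pd (hV i)]
  rw [← integral_finsetSum _ (fun i _ => ci _ (by fun_prop))]
  simp only [← Finset.mul_sum, hd, mul_zero, integral_zero]

def A1 (ζ : R3 → ℝ) (U : Fin 3 → R3 → ℝ) (i j : Fin 3) (x : R3) : ℝ :=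
  pd (MM ζ (U j)) i x - pd (MM ζ (U i)) j x
def A2 (η : R3 → ℝ) (U : Fin 3 → R3 → ℝ) (i j : Fin 3) (x : R3) : ℝ :=
  x i * NN (VV η (U j)) x - x j * NN (VV η (U i)) x

lemma A1_sm {ζ η : R3 → ℝ} (h : Ker ζ η) {U : Fin 3 → R3 → ℝ} (hU : ∀ i, Sm (U i)) (i j : Fin 3) :
    Sm (A1 ζ U i j) := ((MM_sm h (hU j)).pd i).sub ((MM_sm h (hU i)).pd j)
lemma A2_sm {ζ η : R3 → ℝ} (h : Ker ζ η) {U : Fin 3 → R3 → ℝ} (hU : ∀ i, Sm (U i)) (i j : Fin 3) :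
    Sm (A2 η U i j) := ((Sm.coord i).mul (NN_sm (VV_sm h (hU j)))).sub
      ((Sm.coord j).mul (NN_sm (VV_sm h (hU i))))

lemma A1_div {ζ η : R3 → ℝ} (h : Ker ζ η) {U : Fin 3 → R3 → ℝ} (hU : ∀ i, Sm (U i))
    (hd : ∀ x, ∑ i, pd (U i) i x = 0) (j : Fin 3) (x : R3) :
    ∑ i, pd (A1 ζ U i j) i x = U j x - VV η (U j) x := by
  rw [← MM_lap h (hU j)]
  have e : ∀ i, pd (A1 ζ U i j) i x = pd (pd (MM ζ (U j)) i) i x - pd (pd (MM ζ (U i)) i) j x := by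
    intro i
    unfold A1
    rw [pd_sub ((MM_sm h (hU j)).pd i) ((MM_sm h (hU i)).pd j), pd_comm (MM_sm h (hU i)) j i]
  simp only [e, Finset.sum_sub_distrib]
  rw [← pd_sum (f := fun i => pd (MM ζ (U i)) i) (fun i => (MM_sm h (hU i)).pd i)]
  have e2 : (fun y => ∑ i, pd (MM ζ (U i)) i y) = fun _ => (0:ℝ) := by
    funext y
    simp only [fun i => MM_pd h (hU i) i]
    rw [MM_sum h (fun i => (hU i).pd i)]
    simp only [hd]
    simp [MM, PI]
  rw [e2, pd_const]
  simp [lap]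

lemma pd_A2 {ζ η : R3 → ℝ} (h : Ker ζ η) {U : Fin 3 → R3 → ℝ} (hU : ∀ i, Sm (U i)) (i j k : Fin 3)
    (x : R3) : pd (A2 η U i j) k x =
    ((if i = k then 1 else 0) * NN (VV η (U j)) x + x i * pd (NN (VV η (U j))) k x)
    - ((if j = k then 1 else 0) * NN (VV η (U i)) x + x j * pd (NN (VV η (U i))) k x) := by
  unfold A2
  rw [pd_sub ((Sm.coord i).mul (NN_sm (VV_sm h (hU j)))) ((Sm.coord j).mul (NN_sm (VV_sm h (hU i)))),
    pd_mul (Sm.coord i) (NN_sm (VV_sm h (hU j))), pd_mul (Sm.coord j) (NN_sm (VV_sm h (hU i))),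
    pd_coord, pd_coord]

lemma A2_div {ζ η : R3 → ℝ} (h : Ker ζ η) {U : Fin 3 → R3 → ℝ} (hU : ∀ i, Sm (U i))
    (hd : ∀ x, ∑ i, pd (U i) i x = 0) (j : Fin 3) (x : R3) :
    ∑ i, pd (A2 η U i j) i x = VV η (U j) x := by
  have hV : ∀ i, Sm (VV η (U i)) := fun i => VV_sm h (hU i)
  have e2 : ∀ y, ∑ i, pd (VV η (U i)) i y = 0 := by
    intro y
    simp only [fun i => VV_pd h (hU i) i]
    rw [VV_sum h (fun i => (hU i).pd i)]
    simp only [hd]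
    simp [VV, PI]
  have e3 := NN_div hV e2 x
  rw [← NN_ftc (hV j) x]
  simp only [pd_A2 h hU]
  simp only [Fin.sum_univ_three] at e3 ⊢
  fin_cases j
  · simp; linear_combination (-x 0) * e3
  · simp; linear_combination (-x 1) * e3
  · simp; linear_combination (-x 2) * e3

lemma sq_le_of_abs {a m : ℝ} (h : |a| ≤ m) : a ^ 2 ≤ m ^ 2 := by
  rw [← sq_abs]; exact pow_le_pow_left₀ (abs_nonneg _) h 2

lemma coord_le (x : R3) (i : Fin 3) : |x i| ≤ ‖x‖ := by
  simpa using PiLp.norm_apply_le x i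

lemma A2_bound {ζ η : R3 → ℝ} (h : Ker ζ η) {U : Fin 3 → R3 → ℝ} (hU : ∀ i, Sm (U i)) {m : ℝ}
    (h0 : ∀ i, ∀ y : R3, ‖y‖ ≤ 2 → |VV η (U i) y| ≤ m)
    (h1 : ∀ i k, ∀ y : R3, ‖y‖ ≤ 2 → |pd (VV η (U i)) k y| ≤ m) {x : R3} (hx : ‖x‖ ≤ 2) (i j : Fin 3) :
    A2 η U i j x ^ 2 + ∑ k, pd (A2 η U i j) k x ^ 2 ≤ 124 * m ^ 2 := by
  have a1 : ∀ i, |NN (VV η (U i)) x| ≤ m := fun i => NN_bound (h0 i) hx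
  have a2 : ∀ i k, |pd (NN (VV η (U i))) k x| ≤ m := fun i k => NNpd_bound (VV_sm h (hU i)) k (h1 i k) hx
  have a3 : ∀ i, |x i| ≤ 2 := fun i => (coord_le x i).trans hx
  have m0 : 0 ≤ m := (abs_nonneg _).trans (a1 0)
  have pr : ∀ a b : ℝ, |a| ≤ 2 → |b| ≤ m → |a * b| ≤ 2 * m := by
    intro a b ha hb
    rw [abs_mul]; exact mul_le_mul ha hb (abs_nonneg _) (by norm_num)
  have b1 : |A2 η U i j x| ≤ 4 * m := by
    unfold A2
    refine (abs_sub _ _).trans ?_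
    linarith [pr _ _ (a3 i) (a1 j), pr _ _ (a3 j) (a1 i)]
  have ite1 : ∀ (P : Prop) [Decidable P] (b : ℝ), |b| ≤ m → |(if P then 1 else 0) * b| ≤ m := by
    intro P _ b hb
    split_ifs <;> simp [hb, m0]
  have b2 : ∀ k, |pd (A2 η U i j) k x| ≤ 6 * m := by
    intro k
    rw [pd_A2 h hU]
    refine (abs_sub _ _).trans ?_
    refine (add_le_add (abs_add_le _ _) (abs_add_le _ _)).trans ?_
    linarith [pr _ _ (a3 i) (a2 j k), pr _ _ (a3 j) (a2 i k), ite1 (i = k) _ (a1 j), ite1 (j = k) _ (a1 i)]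
  have c1 := sq_le_of_abs b1
  have c2 := fun k => sq_le_of_abs (b2 k)
  simp only [Fin.sum_univ_three]
  nlinarith [c2 0, c2 1, c2 2]

lemma potential : ∃ C, 0 ≤ C ∧ ∀ U : Fin 3 → R3 → ℝ, (∀ i, Sm (U i)) → (∀ x, ∑ i, pd (U i) i x = 0) →
    ∃ A : Fin 3 → Fin 3 → R3 → ℝ, (∀ i j, Sm (A i j)) ∧ (∀ i j x, A i j x = - A j i x) ∧
      (∀ j x, ∑ i, pd (A i j) i x = U j x) ∧
      ∀ i j, ∫ x in closedBall (0:R3) 2, (A i j x ^ 2 + ∑ k, pd (A i j) k x ^ 2) ≤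
        C * ∫ x in closedBall (0:R3) 4, ∑ i, U i x ^ 2 := by
  obtain ⟨ζ, η, h⟩ := exists_ker
  obtain ⟨C1, hC1, HR⟩ := regM h
  set E := (∫ y in closedBall (0:R3) 1, η y ^ 2) + ∑ k, ∫ y in closedBall (0:R3) 1, pd η k y ^ 2 with hE
  have en : 0 ≤ ∫ y in closedBall (0:R3) 1, η y ^ 2 := integral_nonneg fun t => sq_nonneg _
  have enk : ∀ k, 0 ≤ ∫ y in closedBall (0:R3) 1, pd η k y ^ 2 := fun k =>
    integral_nonneg fun t => sq_nonneg _
  have hE0 : 0 ≤ E := add_nonneg en (Finset.sum_nonneg fun k _ => enk k)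
  have hEk : ∀ k, ∫ y in closedBall (0:R3) 1, pd η k y ^ 2 ≤ E := fun k =>
    (Finset.single_le_sum (fun k _ => enk k) (Finset.mem_univ k)).trans (le_add_of_nonneg_left en)
  have hE1 : ∫ y in closedBall (0:R3) 1, η y ^ 2 ≤ E :=
    le_add_of_nonneg_right (Finset.sum_nonneg fun k _ => enk k)
  set vB := (volume : Measure R3).real (closedBall (0:R3) 2) with hvB
  have hvB0 : 0 ≤ vB := vol_nn _
  refine ⟨16 * C1 + 248 * E * vB, by positivity, fun U hU hd => ?_⟩
  have cU : ∀ i, Continuous (U i) := fun i => (hU i).cont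
  set S := ∫ x in closedBall (0:R3) 4, ∑ i, U i x ^ 2 with hS
  have hSi : ∀ i, ∫ x in closedBall (0:R3) 4, U i x ^ 2 ≤ S := fun i =>
    integral_mono (cint _ (by fun_prop) 4) (cint _ (by fun_prop) 4) fun x =>
      Finset.single_le_sum (f := fun i => U i x ^ 2) (fun k _ => sq_nonneg _) (Finset.mem_univ i)
  have hSi0 : ∀ i, 0 ≤ ∫ x in closedBall (0:R3) 4, U i x ^ 2 := fun i =>
    integral_nonneg fun t => sq_nonneg _
  have hS0 : 0 ≤ S := (hSi0 0).trans (hSi 0)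
  set m := Real.sqrt (E * S) with hm
  have hm2 : m ^ 2 = E * S := Real.sq_sqrt (by positivity)
  have s1 := fun i j => A1_sm h hU i j
  have s2 := fun i j => A2_sm h hU i j
  refine ⟨fun i j x => A1 ζ U i j x + A2 η U i j x, fun i j => (s1 i j).add (s2 i j), ?_, ?_, ?_⟩
  · intro i j x; unfold A1 A2; ring
  · intro j x
    simp only [fun i => pd_add (s1 i j) (s2 i j)]
    rw [Finset.sum_add_distrib, A1_div h hU hd, A2_div h hU hd]; ring
  · intro i j
    have v0 : ∀ i, ∀ y : R3, ‖y‖ ≤ 2 → |VV η (U i) y| ≤ m := by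
      intro i y hy
      refine abs_le_of_sq_le_sq (?_) (Real.sqrt_nonneg _)
      rw [hm2]
      refine (VV_sup h.se.cont (cU i) (x := y) (by linarith)).trans ?_
      exact mul_le_mul hE1 (hSi i) (hSi0 i) hE0
    have v1 : ∀ i k, ∀ y : R3, ‖y‖ ≤ 2 → |pd (VV η (U i)) k y| ≤ m := by
      intro i k y hy
      refine abs_le_of_sq_le_sq (?_) (Real.sqrt_nonneg _)
      rw [hm2, VV_ibp h (hU i), neg_sq]
      refine (VV_sup (h.se.pd k).cont (cU i) (x := y) (by linarith)).trans ?_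
      exact mul_le_mul (hEk k) (hSi i) (hSi0 i) hE0
    have hMs : ∀ i, Sm (MM ζ (U i)) := fun i => MM_sm h (hU i)
    set P : Fin 3 → R3 → ℝ := fun i x => ∑ k, pd (MM ζ (U i)) k x ^ 2 with hP
    set Q : Fin 3 → R3 → ℝ := fun i x => ∑ j, ∑ k, pd (pd (MM ζ (U i)) j) k x ^ 2 with hQ
    have cP : ∀ i, Continuous (P i) := fun i => by
      have := fun k => ((hMs i).pd k).cont
      simp only [hP]; fun_prop
    have cQ : ∀ i, Continuous (Q i) := fun i => by
      have := fun j k => (((hMs i).pd j).pd k).cont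
      simp only [hQ]; fun_prop
    have ca : Continuous (fun x => (A1 ζ U i j x + A2 η U i j x) ^ 2 +
        ∑ k, pd (fun x => A1 ζ U i j x + A2 η U i j x) k x ^ 2) := by
      have h1 := ((s1 i j).add (s2 i j)).cont
      have h2 := fun k => (((s1 i j).add (s2 i j)).pd k).cont
      fun_prop
    have key : ∫ x in closedBall (0:R3) 2, ((A1 ζ U i j x + A2 η U i j x) ^ 2 +
        ∑ k, pd (fun x => A1 ζ U i j x + A2 η U i j x) k x ^ 2) ≤
        ∫ x in closedBall (0:R3) 2, (4 * (P i x + P j x) + 4 * (Q i x + Q j x) + 248 * (E * S)) := by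
      refine setIntegral_mono_on (cint _ ca 2) (cint _ (by fun_prop) 2) measurableSet_closedBall
        fun x hx => ?_
      have b2 := A2_bound h hU v0 v1 (x := x) (by simpa using hx) i j
      rw [hm2] at b2
      have p1 : ∀ i k, pd (MM ζ (U i)) k x ^ 2 ≤ P i x := fun i k =>
        Finset.single_le_sum (f := fun k => pd (MM ζ (U i)) k x ^ 2) (fun k _ => sq_nonneg _)
          (Finset.mem_univ k)
      have q1 : ∀ i j, ∑ k, pd (pd (MM ζ (U i)) j) k x ^ 2 ≤ Q i x := fun i j =>
        Finset.single_le_sum (f := fun j => ∑ k, pd (pd (MM ζ (U i)) j) k x ^ 2)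
          (fun k _ => Finset.sum_nonneg fun _ _ => sq_nonneg _) (Finset.mem_univ j)
      have b1 : A1 ζ U i j x ^ 2 ≤ 2 * (P i x + P j x) := by
        unfold A1
        nlinarith [p1 i j, p1 j i, sq_nonneg (pd (MM ζ (U j)) i x + pd (MM ζ (U i)) j x)]
      have b3 : ∑ k, pd (A1 ζ U i j) k x ^ 2 ≤ 2 * (Q i x + Q j x) := by
        have e : ∀ k, pd (A1 ζ U i j) k x ^ 2 ≤ 2 * pd (pd (MM ζ (U j)) i) k x ^ 2 +
            2 * pd (pd (MM ζ (U i)) j) k x ^ 2 := by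
          intro k
          unfold A1
          rw [pd_sub ((hMs j).pd i) ((hMs i).pd j)]
          nlinarith [sq_nonneg (pd (pd (MM ζ (U j)) i) k x + pd (pd (MM ζ (U i)) j) k x)]
        refine (Finset.sum_le_sum fun k _ => e k).trans ?_
        rw [Finset.sum_add_distrib, ← Finset.mul_sum, ← Finset.mul_sum]
        linarith [q1 i j, q1 j i]
      have b4 : ∑ k, pd (fun x => A1 ζ U i j x + A2 η U i j x) k x ^ 2 ≤
          2 * ∑ k, pd (A1 ζ U i j) k x ^ 2 + 2 * ∑ k, pd (A2 η U i j) k x ^ 2 := by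
        rw [Finset.mul_sum, Finset.mul_sum, ← Finset.sum_add_distrib]
        refine Finset.sum_le_sum fun k _ => ?_
        rw [pd_add (s1 i j) (s2 i j)]
        nlinarith [sq_nonneg (pd (A1 ζ U i j) k x - pd (A2 η U i j) k x)]
      nlinarith [sq_nonneg (A1 ζ U i j x - A2 η U i j x)]
    refine key.trans ?_
    rw [integral_add (cint _ (by fun_prop) 2) (cint _ (by fun_prop) 2),
      integral_add (cint _ (by fun_prop) 2) (cint _ (by fun_prop) 2), integral_const_mul,
      integral_const_mul, integral_add (cint _ (by fun_prop) 2) (cint _ (by fun_prop) 2),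
      integral_add (cint _ (by fun_prop) 2) (cint _ (by fun_prop) 2), setIntegral_const, smul_eq_mul]
    have r1 := fun i => ((HR (U i) (hU i)).1).trans (mul_le_mul_of_nonneg_left (hSi i) hC1)
    have r2 := fun i => ((HR (U i) (hU i)).2).trans (mul_le_mul_of_nonneg_left (hSi i) hC1)
    have r1i := r1 i; have r1j := r1 j; have r2i := r2 i; have r2j := r2 j
    change ∫ x in closedBall (0:R3) 2, P i x ≤ _ at r1i
    change ∫ x in closedBall (0:R3) 2, P j x ≤ _ at r1j
    change ∫ x in closedBall (0:R3) 2, Q i x ≤ _ at r2i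
    change ∫ x in closedBall (0:R3) 2, Q j x ≤ _ at r2j
    rw [← hvB]
    nlinarith

lemma scale_int (g : R3 → ℝ) {R b : ℝ} (hR : 0 < R) (hb : 0 ≤ b) :
    ∫ x in closedBall (0:R3) b, g (R • x) = (R ^ 3)⁻¹ * ∫ x in closedBall (0:R3) (R * b), g x := by
  rw [Measure.setIntegral_comp_smul_of_pos _ _ _ hR, smul_closedBall _ _ hb]
  simp [abs_of_pos hR]

lemma potentialR : ∃ C, 0 ≤ C ∧ ∀ u : Fin 3 → R3 → ℝ, (∀ i, Sm (u i)) → (∀ x, ∑ i, pd (u i) i x = 0) →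
    ∀ R : ℝ, 0 < R →
    ∃ A : Fin 3 → Fin 3 → R3 → ℝ, (∀ i j, Sm (A i j)) ∧ (∀ i j x, A i j x = - A j i x) ∧
      (∀ j x, ∑ i, pd (A i j) i x = u j x) ∧
      ∫ x in closedBall (0:R3) (R * 2), ∑ i, ∑ j, ((R⁻¹ ^ 2 * A i j x) ^ 2 + ∑ k, (R⁻¹ * pd (A i j) k x) ^ 2) ≤
        C * (R⁻¹ ^ 2 * ∫ x in closedBall (0:R3) (R * 4), ∑ i, u i x ^ 2) := by
  obtain ⟨C, hC, H⟩ := potential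
  refine ⟨9 * C, by positivity, fun u hu hd R hR => ?_⟩
  obtain ⟨B, sB, aB, dB, bB⟩ := H (fun i x => u i (R • x)) (fun i => (hu i).comp_smul R) (by
    intro x
    simp only [fun i => pd_comp_smul (hu i) R]
    rw [← Finset.mul_sum, hd, mul_zero])
  have sA : ∀ i j, Sm (fun x => B i j (R⁻¹ • x)) := fun i j => (sB i j).comp_smul _
  have pA : ∀ i j k x, pd (fun x => R * B i j (R⁻¹ • x)) k x = pd (B i j) k (R⁻¹ • x) := by
    intro i j k x
    rw [pd_cmul (sA i j), pd_comp_smul (sB i j)]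
    field_simp
  refine ⟨fun i j x => R * B i j (R⁻¹ • x), fun i j => (Sm.cst R).mul (sA i j), ?_, ?_, ?_⟩
  · intro i j x
    have := aB i j (R⁻¹ • x)
    simp only [this]; ring
  · intro j x
    simp only [pA, dB]
    rw [smul_inv_smul₀ hR.ne']
  · simp only [pA]
    set g : R3 → ℝ := fun x => ∑ i, ∑ j, ((R⁻¹ ^ 2 * (R * B i j (R⁻¹ • x))) ^ 2 +
      ∑ k, (R⁻¹ * pd (B i j) k (R⁻¹ • x)) ^ 2) with hg
    have e1 := scale_int g hR (b := 2) (by norm_num)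
    have e2 := scale_int (fun x => ∑ i, u i x ^ 2) hR (b := 4) (by norm_num)
    have gx : ∀ x, g (R • x) = R⁻¹ ^ 2 * ∑ i, ∑ j, (B i j x ^ 2 + ∑ k, pd (B i j) k x ^ 2) := by
      intro x
      simp only [hg, inv_smul_smul₀ hR.ne', Finset.mul_sum, mul_add]
      refine Finset.sum_congr rfl fun i _ => Finset.sum_congr rfl fun j _ => ?_
      congr 1
      · field_simp
      · exact Finset.sum_congr rfl fun k _ => by ring
    have cB := fun i j => (sB i j).cont
    have cB' := fun i j k => ((sB i j).pd k).cont
    simp only [gx] at e1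
    rw [integral_const_mul, integral_finsetSum _ (fun i _ => cint _ (by fun_prop) _)] at e1
    simp only [fun i => integral_finsetSum (μ := volume.restrict (closedBall (0:R3) 2)) Finset.univ
      (f := fun j x => (B i j x ^ 2 + ∑ k, pd (B i j) k x ^ 2)) (fun j _ => cint _ (by fun_prop) _)] at e1
    have e3 : ∑ i, ∑ j, ∫ x in closedBall (0:R3) 2, (B i j x ^ 2 + ∑ k, pd (B i j) k x ^ 2) ≤
        ∑ i : Fin 3, ∑ j : Fin 3, C * ∫ x in closedBall (0:R3) 4, ∑ i, u i (R • x) ^ 2 :=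
      Finset.sum_le_sum fun i _ => Finset.sum_le_sum fun j _ => bB i j
    simp only [Finset.sum_const, Finset.card_univ, Fintype.card_fin, nsmul_eq_mul] at e3
    rw [e2] at e3
    have R3 : 0 < R ^ 3 := by positivity
    have e4 : ∫ x in closedBall (0:_root_.R3) (R * 2), g x = R ^ 3 * (R⁻¹ ^ 2 *
        ∑ i, ∑ j, ∫ x in closedBall (0:_root_.R3) 2, (B i j x ^ 2 + ∑ k, pd (B i j) k x ^ 2)) := by
      rw [e1]; field_simp
    rw [e4]
    calc _ ≤ R ^ 3 * (R⁻¹ ^ 2 * (((3:ℕ):ℝ) * (((3:ℕ):ℝ) * (C * ((R ^ 3)⁻¹ *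
          ∫ x in closedBall (0:_root_.R3) (R * 4), ∑ i, u i x ^ 2))))) := by gcongr
      _ = _ := by push_cast; field_simp; ring

lemma lemB {f w : R3 → ℝ} {b : Fin 3 → R3 → ℝ} (hf : Sm f) (hw : Sm w) (hc : HasCompactSupport w)
    (hb : ∀ i, Sm (b i)) (hdiv : ∀ x, ∑ j, pd (b j) j x = 0) :
    Nul (fun x => (-lap f x + ∑ j, b j x * pd f j x) * w x
      - (∑ j, pd f j x * pd w j x) + f x * ∑ j, b j x * pd w j x) := by
  have h1 : ∀ j, Sm (fun x => b j x * (f x * w x) - pd f j x * w x) := fun j =>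
    ((hb j).mul (hf.mul hw)).sub ((hf.pd j).mul hw)
  have h2 : ∀ j, HasCompactSupport (fun x => b j x * (f x * w x) - pd f j x * w x) := fun j => by
    have : HasCompactSupport (fun x => (b j x * f x - pd f j x) * w x) := hc.mul_left
    convert this using 2
    ring
  refine (Nul.div h1 h2).congr fun x => ?_
  have h3 : ∀ j, pd (fun x => b j x * (f x * w x) - pd f j x * w x) j x =
      pd (b j) j x * (f x * w x) + b j x * (pd f j x * w x + f x * pd w j x)
      - (pd (pd f j) j x * w x + pd f j x * pd w j x) := by
    intro j
    rw [pd_sub ((hb j).mul (hf.mul hw)) ((hf.pd j).mul hw), pd_mul (hb j) (hf.mul hw), pd_mul hf hw,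
      pd_mul (hf.pd j) hw]
  simp only [h3]
  have := hdiv x
  unfold lap
  simp only [Fin.sum_univ_three] at this ⊢
  linear_combination (f x * w x) * this

/-- `∑ ∂ᵢg Tᵢ` integrates to zero for divergence free `T`. -/
lemma lemC {g : R3 → ℝ} {T : Fin 3 → R3 → ℝ} (hg : Sm g) (hT : ∀ i, Sm (T i))
    (hc : ∀ i, HasCompactSupport (T i)) (hd : ∀ x, ∑ i, pd (T i) i x = 0) :
    Nul (fun x => ∑ i, pd g i x * T i x) := by
  refine (Nul.div (f := fun i x => g x * T i x) (fun i => hg.mul (hT i)) (fun i => (hc i).mul_left)).congr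
    fun x => ?_
  simp only [fun i => pd_mul hg (hT i), Finset.sum_add_distrib, ← Finset.mul_sum, hd]
  simp

/-- divergence of a symmetric-type product tested against T -/
lemma lemE {F T : Fin 3 → R3 → ℝ} (hF : ∀ i, Sm (F i)) {t : R3 → ℝ} (ht : Sm t)
    (hc : HasCompactSupport t) :
    Nul (fun x => (∑ j, pd (F j) j x) * t x + ∑ j, F j x * pd t j x) := by
  refine (Nul.div (f := fun i x => F i x * t x) (fun i => (hF i).mul ht) (fun i => hc.mul_left)).congr
    fun x => ?_
  simp only [fun i => pd_mul (hF i) ht, Finset.sum_add_distrib, ← Finset.sum_mul]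

def WW (φ : R3 → ℝ) (A : Fin 3 → Fin 3 → R3 → ℝ) (j : Fin 3) (x : R3) : ℝ :=
  ∑ i, pd φ i x * A i j x

section WWs
variable {φ : R3 → ℝ} {A : Fin 3 → Fin 3 → R3 → ℝ} {u : Fin 3 → R3 → ℝ}

lemma WW_sm (hφ : Sm φ) (hA : ∀ i j, Sm (A i j)) (j : Fin 3) : Sm (WW φ A j) :=
  Sm.sum fun i => (hφ.pd i).mul (hA i j)

lemma WW_hcs (hc : HasCompactSupport φ) (j : Fin 3) : HasCompactSupport (WW φ A j) := by
  have h := fun i => (hcs_pd hc i).mul_right (f' := A i j)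
  have : HasCompactSupport (fun x => pd φ 0 x * A 0 j x + pd φ 1 x * A 1 j x + pd φ 2 x * A 2 j x) :=
    ((h 0).add (h 1)).add (h 2)
  unfold WW
  simpa only [Fin.sum_univ_three] using this

lemma WW_pd (hφ : Sm φ) (hA : ∀ i j, Sm (A i j)) (j k : Fin 3) (x : R3) :
    pd (WW φ A j) k x = ∑ i, (pd (pd φ i) k x * A i j x + pd φ i x * pd (A i j) k x) := by
  unfold WW
  rw [pd_sum (fun i => (hφ.pd i).mul (hA i j))]
  exact Finset.sum_congr rfl fun i _ => pd_mul (hφ.pd i) (hA i j) k x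

lemma WW_div (hφ : Sm φ) (hA : ∀ i j, Sm (A i j)) (hs : ∀ i j x, A i j x = - A j i x)
    (hd : ∀ j x, ∑ i, pd (A i j) i x = u j x) (x : R3) :
    ∑ j, pd (WW φ A j) j x = - ∑ i, pd φ i x * u i x := by
  simp only [WW_pd hφ hA]
  have hs' : ∀ i j k, pd (A i j) k x = - pd (A j i) k x := by
    intro i j k
    have : A i j = fun y => - A j i y := funext fun y => hs i j y
    rw [this, pd_neg]
  have d0 := hd 0 x
  have d1 := hd 1 x
  have d2 := hd 2 x
  simp only [Fin.sum_univ_three] at *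
  rw [← d0, ← d1, ← d2]
  have a := fun i => hs i i x
  have a0 : A 0 0 x = 0 := by linarith [a 0]
  have a1 : A 1 1 x = 0 := by linarith [a 1]
  have a2 : A 2 2 x = 0 := by linarith [a 2]
  have b0 : pd (A 0 0) 0 x = 0 := by linarith [hs' 0 0 0]
  have b1 : pd (A 1 1) 1 x = 0 := by linarith [hs' 1 1 1]
  have b2 : pd (A 2 2) 2 x = 0 := by linarith [hs' 2 2 2]
  rw [a0, a1, a2, b0, b1, b2, hs 1 0, hs 2 0, hs 2 1, hs' 1 0, hs' 2 0, hs' 2 1, hs' 1 0 1, hs' 2 0 2,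
    hs' 2 1 2, pd_comm hφ 1 0, pd_comm hφ 2 0, pd_comm hφ 2 1]
  ring

end WWs

/-- energy density -/
def DD (u v : Fin 3 → R3 → ℝ) (θ : R3 → ℝ) (x : R3) : ℝ :=
  (∑ i, ∑ j, pd (u i) j x ^ 2) + (∑ i, ∑ j, pd (v i) j x ^ 2) + ∑ j, pd θ j x ^ 2

def RHS (u v : Fin 3 → R3 → ℝ) (θ φ : R3 → ℝ) (w : Fin 3 → R3 → ℝ) (x : R3) : ℝ :=
  1/2 * (((∑ i, u i x ^ 2) + (∑ i, v i x ^ 2) + θ x ^ 2) * (lap φ x + ∑ j, u j x * pd φ j x))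
  - (∑ i, ∑ j, pd (u i) j x * pd (w i) j x)
  + (∑ i, ∑ j, (u i x * u j x + v i x * v j x) * pd (w i) j x)
  + (∑ i, u i x * v i x) * (∑ j, v j x * pd φ j x)
  + θ x * ∑ j, v j x * pd φ j x

lemma energy {u v : Fin 3 → R3 → ℝ} {π θ φ : R3 → ℝ} {A : Fin 3 → Fin 3 → R3 → ℝ}
    (hu : ∀ i, Sm (u i)) (hv : ∀ i, Sm (v i)) (hπ : Sm π) (hθ : Sm θ)
    (h1 : ∀ i x, -lap (u i) x + (∑ j, u j x * pd (u i) j x) + pd π i x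
      + (∑ j, pd (fun y => v j y * v i y) j x) = 0)
    (h2 : ∀ i x, -lap (v i) x + (∑ j, u j x * pd (v i) j x) + pd θ i x
      + (∑ j, v j x * pd (u i) j x) = 0)
    (h3 : ∀ x, -lap θ x + (∑ j, u j x * pd θ j x) + (∑ j, pd (v j) j x) = 0)
    (h4 : ∀ x, (∑ j, pd (u j) j x) = 0)
    (hφ : Sm φ) (hc : HasCompactSupport φ)
    (hA : ∀ i j, Sm (A i j)) (hs : ∀ i j x, A i j x = - A j i x)
    (hd : ∀ j x, ∑ i, pd (A i j) i x = u j x) :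
    Nul (fun x => - (φ x * DD u v θ x) + RHS u v θ φ (WW φ A) x) := by
  have hw := fun j => WW_sm (A := A) hφ hA j
  have cw := fun j => WW_hcs (A := A) hc j
  have hT : ∀ i, Sm (fun x => φ x * u i x + WW φ A i x) := fun i => (hφ.mul (hu i)).add (hw i)
  have cT : ∀ i, HasCompactSupport (fun x => φ x * u i x + WW φ A i x) := fun i =>
    hc.mul_right.add (cw i)
  have pT : ∀ i j x, pd (fun x => φ x * u i x + WW φ A i x) j x =
      pd φ j x * u i x + φ x * pd (u i) j x + pd (WW φ A i) j x := by
    intro i j x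
    rw [pd_add (hφ.mul (hu i)) (hw i), pd_mul hφ (hu i)]
  have dT : ∀ x, ∑ i, pd (fun x => φ x * u i x + WW φ A i x) i x = 0 := by
    intro x
    have e1 := WW_div hφ hA hs hd x
    have e2 := h4 x
    simp only [pT]
    simp only [Fin.sum_univ_three] at *
    linear_combination e1 + φ x * e2
  have N1 := Nul.sum fun i => lemA (hu i) hφ hc hu h4
  have N2 := Nul.sum fun i => lemA (hv i) hφ hc hu h4
  have N3 := lemA hθ hφ hc hu h4
  have N4 := Nul.sum fun i => lemB (hu i) (hw i) (cw i) hu h4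
  have N5 := lemC hπ hT cT dT
  have N6 := Nul.sum fun i => lemE (T := u) (F := fun j x => v j x * v i x)
    (fun j => (hv j).mul (hv i)) (hT i) (cT i)
  have N7 := lemE (T := u) (F := v) hv (hθ.mul hφ) hc.mul_left
  refine ((((((N1.add N2).add N3).add N4).add N5).add N6).add N7).congr fun x => ?_
  have pθ : ∀ j, pd (fun x => θ x * φ x) j x = pd θ j x * φ x + θ x * pd φ j x := fun j =>
    pd_mul hθ hφ j x
  simp only [pT, pθ]
  have E1 : ∀ i, ∑ j, pd (fun y => v j y * v i y) j x =
    -(-lap (u i) x + (∑ j, u j x * pd (u i) j x) + pd π i x) := fun i => by linarith [h1 i x]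
  have E2 := fun i => h2 i x
  have E3 := h3 x
  simp only [E1]
  unfold DD RHS
  simp only [Fin.sum_univ_three] at *
  linear_combination (φ x * v 0 x) * E2 0 + (φ x * v 1 x) * E2 1 + (φ x * v 2 x) * E2 2 + (φ x * θ x) * E3

def Ann (R : ℝ) : Set R3 := closedBall (0:R3) (2 * R) \ ball (0:R3) R

lemma Ann_compact (R : ℝ) : IsCompact (Ann R) := (isCompact_closedBall _ _).diff isOpen_ball

lemma pd_congr_nhds {f g : R3 → ℝ} {x : R3} (h : f =ᶠ[nhds x] g) (j : Fin 3) : pd f j x = pd g j x := by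
  unfold pd; rw [h.fderiv_eq]

lemma Cut.off {R : ℝ} {χ : R3 → ℝ} (h : Cut R (2 * R) χ) {x : R3} (hx : x ∉ Ann R) :
    (∀ i, pd χ i x = 0) ∧ (∀ i k, pd (pd χ i) k x = 0) := by
  by_cases hb : x ∈ closedBall (0:R3) (2 * R)
  · have hx' : x ∈ ball (0:R3) R := by
      by_contra h'; exact hx ⟨hb, h'⟩
    have e1 : ∀ y ∈ ball (0:R3) R, χ =ᶠ[nhds y] fun _ => (1:ℝ) := fun y hy =>
      Filter.eventuallyEq_of_mem (isOpen_ball.mem_nhds hy) fun z hz => h.one z (ball_subset_closedBall hz)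
    have e2 : ∀ y ∈ ball (0:R3) R, ∀ i, pd χ i y = 0 := fun y hy i => by
      rw [pd_congr_nhds (e1 y hy), pd_const]
    refine ⟨e2 x hx', fun i k => ?_⟩
    have : pd χ i =ᶠ[nhds x] fun _ => (0:ℝ) :=
      Filter.eventuallyEq_of_mem (isOpen_ball.mem_nhds hx') fun z hz => e2 z hz i
    rw [pd_congr_nhds this, pd_const]
  · have : x ∉ tsupport χ := fun h' => hb (h.supp h')
    exact ⟨fun i => pd_off i this, fun i k => pd2_off i k this⟩

lemma Cut.pow {a b : ℝ} {χ : R3 → ℝ} (h : Cut a b χ) (n : ℕ) : Cut a b (fun x => χ x ^ (n+1)) where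
  sm := h.sm.pow _
  nn x := pow_nonneg (h.nn x) _
  le x := pow_le_one₀ (h.nn x) (h.le x)
  one x hx := by simp [h.one x hx]
  supp := by
    refine subset_trans (closure_mono fun x hx => ?_) h.supp
    intro h'
    exact hx (by simp [h'])

lemma Cut.scale {Ψ : R3 → ℝ} (h : Cut 1 2 Ψ) {R : ℝ} (hR : 0 < R) :
    Cut R (2 * R) (fun x => Ψ (R⁻¹ • x)) where
  sm := h.sm.comp_smul _
  nn x := h.nn _
  le x := h.le _
  one x hx := by
    apply h.one
    simp only [mem_closedBall, dist_zero_right, norm_smul, norm_inv, Real.norm_eq_abs, abs_of_pos hR] at *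
    rw [inv_mul_le_iff₀ hR]; linarith
  supp := by
    refine closure_minimal (fun x hx => ?_) isClosed_closedBall
    have := h.supp (subset_tsupport _ hx)
    simp only [mem_closedBall, dist_zero_right, norm_smul, norm_inv, Real.norm_eq_abs, abs_of_pos hR] at *
    rw [inv_mul_le_iff₀ hR] at this; linarith

lemma exists_cutR : ∃ M, 0 ≤ M ∧ ∀ R : ℝ, 0 < R → ∃ ψ, Cut R (2 * R) ψ ∧
    (∀ i x, |pd ψ i x| ≤ M * R⁻¹) ∧ (∀ i x, |pd (fun y => ψ y ^ 6) i x| ≤ M * R⁻¹ * ψ x ^ 4) ∧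
    (∀ i k x, |pd (pd (fun y => ψ y ^ 6) i) k x| ≤ M * R⁻¹ ^ 2 * ψ x ^ 4) := by
  obtain ⟨Ψ, hΨ⟩ := exists_cut (a := 1) (b := 2) (by norm_num) (by norm_num)
  choose K1 hK1 HK1 using fun i => bdd_cc (hΨ.sm.pd i).cont (hcs_pd hΨ.hcs i)
  choose K2 hK2 HK2 using fun i k => bdd_cc ((hΨ.sm.pd i).pd k).cont (hcs_pd (hcs_pd hΨ.hcs i) k)
  set K := (∑ i, K1 i) + ∑ i, ∑ k, K2 i k with hK
  have s2 : ∀ i, 0 ≤ ∑ k, K2 i k := fun i => Finset.sum_nonneg fun k _ => hK2 i k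
  have k1 : ∀ i, K1 i ≤ K := fun i =>
    (Finset.single_le_sum (fun i _ => hK1 i) (Finset.mem_univ i)).trans
      (le_add_of_nonneg_right (Finset.sum_nonneg fun i _ => s2 i))
  have k2 : ∀ i k, K2 i k ≤ K := fun i k =>
    ((Finset.single_le_sum (fun k _ => hK2 i k) (Finset.mem_univ k)).trans
      (Finset.single_le_sum (f := fun i => ∑ k, K2 i k) (fun i _ => s2 i) (Finset.mem_univ i))).trans
      (le_add_of_nonneg_left (Finset.sum_nonneg fun i _ => hK1 i))
  have hK0 : 0 ≤ K := (hK1 0).trans (k1 0)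
  have B1 := fun i x => (HK1 i x).trans (k1 i)
  have B2 := fun i k x => (HK2 i k x).trans (k2 i k)
  refine ⟨30 * K ^ 2 + 6 * K, by positivity, fun R hR => ?_⟩
  have hC := hΨ.scale hR
  have Ri : 0 ≤ R⁻¹ := by positivity
  refine ⟨_, hC, ?_, ?_, ?_⟩
  · intro i x
    rw [pd_comp_smul hΨ.sm, abs_mul, abs_of_nonneg Ri]
    have := B1 i (R⁻¹ • x)
    have h2 : R⁻¹ * |pd Ψ i (R⁻¹ • x)| ≤ R⁻¹ * K := mul_le_mul_of_nonneg_left this Ri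
    have : 0 ≤ K ^ 2 * R⁻¹ := by positivity
    have : 0 ≤ K * R⁻¹ := by positivity
    nlinarith
  · intro i x
    rw [pd_pow hC.sm 5, pd_comp_smul hΨ.sm, abs_mul, abs_mul, abs_mul, abs_of_nonneg Ri]
    have p0 := hΨ.nn (R⁻¹ • x)
    have p1 := hΨ.le (R⁻¹ • x)
    have b1 := B1 i (R⁻¹ • x)
    set p := Ψ (R⁻¹ • x)
    rw [abs_of_nonneg (pow_nonneg p0 5)]
    norm_num
    have : p ^ 5 ≤ p ^ 4 := pow_le_pow_of_le_one p0 p1 (by norm_num)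
    calc 6 * p ^ 5 * (R⁻¹ * |pd Ψ i (R⁻¹ • x)|) ≤ 6 * p ^ 4 * (R⁻¹ * K) := by gcongr
      _ = (6 * K) * R⁻¹ * p ^ 4 := by ring
      _ ≤ _ := by gcongr; nlinarith [sq_nonneg K]
  · intro i k x
    have e : pd (fun y => Ψ (R⁻¹ • y) ^ 6) i = fun y => 6 * R⁻¹ * (Ψ (R⁻¹ • y) ^ 5 * pd Ψ i (R⁻¹ • y)) := by
      funext y
      rw [pd_pow hC.sm 5, pd_comp_smul hΨ.sm]
      norm_num; ring
    rw [e, pd_cmul ((hC.sm.pow 5).mul ((hΨ.sm.pd i).comp_smul _)),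
      pd_mul (hC.sm.pow 5) ((hΨ.sm.pd i).comp_smul _), pd_pow hC.sm 4, pd_comp_smul hΨ.sm,
      pd_comp_smul (hΨ.sm.pd i)]
    have p0 := hΨ.nn (R⁻¹ • x)
    have p1 := hΨ.le (R⁻¹ • x)
    have b1 := B1 i (R⁻¹ • x)
    have b2 := B1 k (R⁻¹ • x)
    have b3 := B2 i k (R⁻¹ • x)
    set p := Ψ (R⁻¹ • x)
    set α := pd Ψ i (R⁻¹ • x)
    set β := pd Ψ k (R⁻¹ • x)
    set γ := pd (pd Ψ i) k (R⁻¹ • x)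
    have : p ^ 5 ≤ p ^ 4 := pow_le_pow_of_le_one p0 p1 (by norm_num)
    have e2 : 6 * R⁻¹ * (((4:ℕ) + 1 : ℝ) * p ^ 4 * (R⁻¹ * β) * α + p ^ 5 * (R⁻¹ * γ)) =
      R⁻¹ ^ 2 * (30 * (p ^ 4 * (β * α)) + 6 * (p ^ 5 * γ)) := by push_cast; ring
    rw [e2, abs_mul, abs_of_nonneg (by positivity)]
    have e3 : |30 * (p ^ 4 * (β * α)) + 6 * (p ^ 5 * γ)| ≤ 30 * (p ^ 4 * (K * K)) + 6 * (p ^ 4 * K) := by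
      refine (abs_add_le _ _).trans ?_
      rw [abs_mul, abs_mul, abs_mul 6, abs_mul, abs_mul, abs_of_nonneg (pow_nonneg p0 4),
        abs_of_nonneg (pow_nonneg p0 5)]
      norm_num
      gcongr
    calc _ ≤ R⁻¹ ^ 2 * (30 * (p ^ 4 * (K * K)) + 6 * (p ^ 4 * K)) := by gcongr
      _ = _ := by ring

def HH (R : ℝ) (A : Fin 3 → Fin 3 → R3 → ℝ) (x : R3) : ℝ :=
  ∑ i, ∑ j, ((R⁻¹ ^ 2 * A i j x) ^ 2 + ∑ k, (R⁻¹ * pd (A i j) k x) ^ 2)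

lemma HH_nn (R : ℝ) (A : Fin 3 → Fin 3 → R3 → ℝ) (x : R3) : 0 ≤ HH R A x :=
  Finset.sum_nonneg fun _ _ => Finset.sum_nonneg fun _ _ =>
    add_nonneg (sq_nonneg _) (Finset.sum_nonneg fun _ _ => sq_nonneg _)

lemma HH_ge {R : ℝ} {A : Fin 3 → Fin 3 → R3 → ℝ} (x : R3) (i j : Fin 3) :
    (R⁻¹ ^ 2 * A i j x) ^ 2 + ∑ k, (R⁻¹ * pd (A i j) k x) ^ 2 ≤ HH R A x := by
  have nn : ∀ i j, 0 ≤ (R⁻¹ ^ 2 * A i j x) ^ 2 + ∑ k, (R⁻¹ * pd (A i j) k x) ^ 2 := fun i j =>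
    add_nonneg (sq_nonneg _) (Finset.sum_nonneg fun _ _ => sq_nonneg _)
  exact (Finset.single_le_sum (f := fun j => (R⁻¹ ^ 2 * A i j x) ^ 2 + ∑ k, (R⁻¹ * pd (A i j) k x) ^ 2)
    (fun j _ => nn i j) (Finset.mem_univ j)).trans
    (Finset.single_le_sum (f := fun i => ∑ j, ((R⁻¹ ^ 2 * A i j x) ^ 2 + ∑ k, (R⁻¹ * pd (A i j) k x) ^ 2))
      (fun i _ => Finset.sum_nonneg fun j _ => nn i j) (Finset.mem_univ i))

lemma HH_A {R : ℝ} (hR : 0 < R) {A : Fin 3 → Fin 3 → R3 → ℝ} (x : R3) (i j : Fin 3) :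
    R⁻¹ ^ 2 * |A i j x| ≤ Real.sqrt (HH R A x) := by
  have h := HH_ge (R := R) (A := A) x i j
  have : 0 ≤ ∑ k, (R⁻¹ * pd (A i j) k x) ^ 2 := Finset.sum_nonneg fun _ _ => sq_nonneg _
  have h2 := Real.abs_le_sqrt (x := R⁻¹ ^ 2 * A i j x) (y := HH R A x) (by linarith)
  rwa [abs_mul, abs_of_nonneg (by positivity)] at h2

lemma HH_dA {R : ℝ} (hR : 0 < R) {A : Fin 3 → Fin 3 → R3 → ℝ} (x : R3) (i j k : Fin 3) :
    R⁻¹ * |pd (A i j) k x| ≤ Real.sqrt (HH R A x) := by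
  have h := HH_ge (R := R) (A := A) x i j
  have h1 := Finset.single_le_sum (f := fun k => (R⁻¹ * pd (A i j) k x) ^ 2) (fun k _ => sq_nonneg _)
    (Finset.mem_univ k)
  have h3 : 0 ≤ (R⁻¹ ^ 2 * A i j x) ^ 2 := sq_nonneg _
  have h2 := Real.abs_le_sqrt (x := R⁻¹ * pd (A i j) k x) (y := HH R A x) (by linarith)
  rwa [abs_mul, abs_of_nonneg (by positivity)] at h2

lemma WW_bound {R M : ℝ} (hR : 0 < R) {φ : R3 → ℝ} {A : Fin 3 → Fin 3 → R3 → ℝ} (hφ : Sm φ)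
    (hA : ∀ i j, Sm (A i j)) {x : R3} {c : ℝ} (hM : 0 ≤ M * c)
    (h1 : ∀ i, |pd φ i x| ≤ M * R⁻¹ * c) (h2 : ∀ i k, |pd (pd φ i) k x| ≤ M * R⁻¹ ^ 2 * c) (j k : Fin 3) :
    |pd (WW φ A j) k x| ≤ 6 * M * (c * Real.sqrt (HH R A x)) := by
  rw [WW_pd hφ hA]
  have Ri : 0 ≤ R⁻¹ := by positivity
  have e : ∀ i, |pd (pd φ i) k x * A i j x + pd φ i x * pd (A i j) k x| ≤
      2 * M * (c * Real.sqrt (HH R A x)) := by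
    intro i
    refine (abs_add_le _ _).trans ?_
    rw [abs_mul, abs_mul]
    have a1 := mul_le_mul_of_nonneg_right (h2 i k) (abs_nonneg (A i j x))
    have a2 := mul_le_mul_of_nonneg_right (h1 i) (abs_nonneg (pd (A i j) k x))
    have b1 := mul_le_mul_of_nonneg_left (HH_A hR (A := A) x i j) hM
    have b2 := mul_le_mul_of_nonneg_left (HH_dA hR (A := A) x i j k) hM
    nlinarith
  simp only [Fin.sum_univ_three]
  refine (abs_add_three _ _ _).trans ?_
  linarith [e 0, e 1, e 2]

/-- sum of squares -/
def SS (f : Fin 3 → R3 → ℝ) (x : R3) : ℝ := ∑ i, f i x ^ 2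
def SA (f : Fin 3 → R3 → ℝ) (x : R3) : ℝ := ∑ i, |f i x|

lemma SS_nn (f : Fin 3 → R3 → ℝ) (x : R3) : 0 ≤ SS f x := Finset.sum_nonneg fun _ _ => sq_nonneg _
lemma SA_nn (f : Fin 3 → R3 → ℝ) (x : R3) : 0 ≤ SA f x := Finset.sum_nonneg fun _ _ => abs_nonneg _

lemma SA_sq (f : Fin 3 → R3 → ℝ) (x : R3) : SA f x ^ 2 ≤ 3 * SS f x := by
  unfold SA SS
  simp only [Fin.sum_univ_three, ← sq_abs (f _ x)]
  nlinarith [sq_nonneg (|f 0 x| - |f 1 x|), sq_nonneg (|f 0 x| - |f 2 x|), sq_nonneg (|f 1 x| - |f 2 x|)]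

lemma dot_le {f : Fin 3 → R3 → ℝ} {g : Fin 3 → ℝ} {c : ℝ} (x : R3) (hg : ∀ i, |g i| ≤ c) :
    |∑ i, f i x * g i| ≤ SA f x * c := by
  refine (Finset.abs_sum_le_sum_abs _ _).trans ?_
  unfold SA
  rw [Finset.sum_mul]
  refine Finset.sum_le_sum fun i _ => ?_
  rw [abs_mul]
  exact mul_le_mul_of_nonneg_left (hg i) (abs_nonneg _)

def ZZ (R : ℝ) (u v : Fin 3 → R3 → ℝ) (θ ψ G : R3 → ℝ) (x : R3) : ℝ :=
  R⁻¹ ^ 2 * (SS u x + SS v x + θ x ^ 2) + R⁻¹ * (SA u x * (SS u x + SS v x + θ x ^ 2))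
  + R⁻¹ * (|θ x| * SA v x) + ψ x ^ 4 * Real.sqrt (G x) * (SS u x + SS v x) + G x

lemma quad_le {f : Fin 3 → R3 → ℝ} {g : Fin 3 → Fin 3 → ℝ} {c : ℝ} (hc : 0 ≤ c) (x : R3)
    (hg : ∀ i j, |g i j| ≤ c) :
    |∑ i, ∑ j, f i x * f j x * g i j| ≤ 3 * SS f x * c := by
  have e : ∑ i, ∑ j, f i x * f j x * g i j = ∑ i, f i x * ∑ j, f j x * g i j := by
    refine Finset.sum_congr rfl fun i _ => ?_
    rw [Finset.mul_sum]
    exact Finset.sum_congr rfl fun j _ => by ring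
  rw [e]
  refine (dot_le x (c := SA f x * c) fun i => dot_le x (hg i)).trans ?_
  nlinarith [SA_sq f x]

set_option maxHeartbeats 1000000 in
lemma point {R M : ℝ} (hR : 0 < R) (hM : 0 ≤ M) {u v : Fin 3 → R3 → ℝ} {θ ψ : R3 → ℝ}
    {A : Fin 3 → Fin 3 → R3 → ℝ} (hA : ∀ i j, Sm (A i j)) (hψ : Cut R (2 * R) ψ)
    (h1 : ∀ i x, |pd (fun y => ψ y ^ 6) i x| ≤ M * R⁻¹ * ψ x ^ 4)
    (h2 : ∀ i k x, |pd (pd (fun y => ψ y ^ 6) i) k x| ≤ M * R⁻¹ ^ 2 * ψ x ^ 4) (x : R3) :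
    RHS u v θ (fun y => ψ y ^ 6) (WW (fun y => ψ y ^ 6) A) x ≤
      1/2 * (ψ x ^ 6 * DD u v θ x) + (18 * M + 162 * M ^ 2) * ZZ R u v θ ψ (HH R A) x := by
  have p0 := hψ.nn x
  have p1 := hψ.le x
  have p4 : ψ x ^ 4 ≤ 1 := pow_le_one₀ p0 p1
  have p40 : 0 ≤ ψ x ^ 4 := pow_nonneg p0 4
  have Ri : 0 ≤ R⁻¹ := by positivity
  set φ : R3 → ℝ := fun y => ψ y ^ 6 with hφ
  have wb := fun j k => WW_bound (A := A) hR (hψ.pow 5).sm hA (M := M) (x := x) (c := ψ x ^ 4)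
    (by positivity) (fun i => h1 i x) (fun i k => h2 i k x) j k
  set h := Real.sqrt (HH R A x) with hh
  have h0 : 0 ≤ h := Real.sqrt_nonneg _
  have hsq : h ^ 2 = HH R A x := Real.sq_sqrt (HH_nn _ _ _)
  have d1 : ∀ i, |pd φ i x| ≤ M * R⁻¹ := fun i => (h1 i x).trans (by
    have : 0 ≤ M * R⁻¹ := by positivity
    nlinarith)
  have d2 : |lap φ x| ≤ 3 * (M * R⁻¹ ^ 2) := by
    have : ∀ i, |pd (pd φ i) i x| ≤ M * R⁻¹ ^ 2 := fun i => (h2 i i x).trans (by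
      have : 0 ≤ M * R⁻¹ ^ 2 := by positivity
      nlinarith)
    unfold lap
    simp only [Fin.sum_univ_three]
    refine (abs_add_three _ _ _).trans ?_
    linarith [this 0, this 1, this 2]
  have su := SS_nn u x
  have sv := SS_nn v x
  have au := SA_nn u x
  have av := SA_nn v x
  have st : 0 ≤ θ x ^ 2 := sq_nonneg _
  set S := SS u x + SS v x + θ x ^ 2 with hS
  have S0 : 0 ≤ S := by positivity
  have du : |∑ j, u j x * pd φ j x| ≤ SA u x * (M * R⁻¹) := dot_le x d1
  have dv : |∑ j, v j x * pd φ j x| ≤ SA v x * (M * R⁻¹) := dot_le x d1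
  have t1 : 1/2 * (S * (lap φ x + ∑ j, u j x * pd φ j x)) ≤
      3/2 * M * (R⁻¹ ^ 2 * S) + 1/2 * M * (R⁻¹ * (SA u x * S)) := by
    have : lap φ x + ∑ j, u j x * pd φ j x ≤ 3 * (M * R⁻¹ ^ 2) + SA u x * (M * R⁻¹) :=
      add_le_add ((le_abs_self _).trans d2) ((le_abs_self _).trans du)
    nlinarith [mul_le_mul_of_nonneg_left this S0]
  have t2 : - (∑ i, ∑ j, pd (u i) j x * pd (WW φ A i) j x) ≤
      1/2 * (ψ x ^ 6 * DD u v θ x) + 162 * M ^ 2 * HH R A x := by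
    have e : ∀ i j, - (pd (u i) j x * pd (WW φ A i) j x) ≤
        1/2 * (ψ x ^ 6 * pd (u i) j x ^ 2) + 18 * M ^ 2 * HH R A x := by
      intro i j
      have a1 : |pd (WW φ A i) j x| ≤ ψ x ^ 3 * (6 * M * h) := by
        refine (wb i j).trans ?_
        have : ψ x ^ 4 ≤ ψ x ^ 3 := pow_le_pow_of_le_one p0 p1 (by norm_num)
        have : 0 ≤ M * h := by positivity
        nlinarith
      have a2 : - (pd (u i) j x * pd (WW φ A i) j x) ≤ |pd (u i) j x| * (ψ x ^ 3 * (6 * M * h)) := by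
        refine (neg_le_abs _).trans ?_
        rw [abs_mul]
        exact mul_le_mul_of_nonneg_left a1 (abs_nonneg _)
      rw [← hsq, ← sq_abs (pd (u i) j x)]
      nlinarith [sq_nonneg (ψ x ^ 3 * |pd (u i) j x| - 6 * M * h)]
    have e2 : (∑ i, ∑ j, pd (u i) j x ^ 2) ≤ DD u v θ x := by
      unfold DD
      have : 0 ≤ ∑ i, ∑ j, pd (v i) j x ^ 2 := Finset.sum_nonneg fun _ _ => Finset.sum_nonneg fun _ _ => sq_nonneg _
      have : 0 ≤ ∑ j, pd θ j x ^ 2 := Finset.sum_nonneg fun _ _ => sq_nonneg _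
      linarith
    have e3 := mul_le_mul_of_nonneg_left e2 (pow_nonneg p0 6)
    simp only [Fin.sum_univ_three] at *
    linarith [e 0 0, e 0 1, e 0 2, e 1 0, e 1 1, e 1 2, e 2 0, e 2 1, e 2 2]
  have t3 : (∑ i, ∑ j, (u i x * u j x + v i x * v j x) * pd (WW φ A i) j x) ≤
      18 * M * (ψ x ^ 4 * h * (SS u x + SS v x)) := by
    have c0 : 0 ≤ 6 * M * (ψ x ^ 4 * h) := by positivity
    have q1 := quad_le (f := u) c0 x (fun i j => wb i j)
    have q2 := quad_le (f := v) c0 x (fun i j => wb i j)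
    simp only [add_mul, Finset.sum_add_distrib]
    nlinarith [le_abs_self (∑ i, ∑ j, u i x * u j x * pd (WW φ A i) j x),
      le_abs_self (∑ i, ∑ j, v i x * v j x * pd (WW φ A i) j x)]
  have t4 : (∑ i, u i x * v i x) * (∑ j, v j x * pd φ j x) ≤ 3 * M * (R⁻¹ * (SA u x * S)) := by
    have a1 : |∑ i, u i x * v i x| ≤ SA u x * SA v x := dot_le x fun i =>
      Finset.single_le_sum (f := fun i => |v i x|) (fun _ _ => abs_nonneg _) (Finset.mem_univ i)
    refine (le_abs_self _).trans ?_
    rw [abs_mul]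
    refine (mul_le_mul a1 dv (abs_nonneg _) (by positivity)).trans ?_
    have a2 : SA v x ^ 2 ≤ 3 * S := (SA_sq v x).trans (by linarith)
    have a3 : 0 ≤ M * R⁻¹ * SA u x := by positivity
    nlinarith [mul_le_mul_of_nonneg_left a2 a3]
  have t5 : θ x * (∑ j, v j x * pd φ j x) ≤ M * (R⁻¹ * (|θ x| * SA v x)) := by
    refine (le_abs_self _).trans ?_
    rw [abs_mul]
    refine (mul_le_mul_of_nonneg_left dv (abs_nonneg _)).trans (le_of_eq ?_)
    ring
  have z1 : 0 ≤ R⁻¹ ^ 2 * S := by positivity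
  have z2 : 0 ≤ R⁻¹ * (SA u x * S) := by positivity
  have z3 : 0 ≤ R⁻¹ * (|θ x| * SA v x) := by positivity
  have z4 : 0 ≤ ψ x ^ 4 * h * (SS u x + SS v x) := by positivity
  have z5 : 0 ≤ HH R A x := HH_nn _ _ _
  have hR' : RHS u v θ φ (WW φ A) x = 1/2 * (S * (lap φ x + ∑ j, u j x * pd φ j x))
    - (∑ i, ∑ j, pd (u i) j x * pd (WW φ A i) j x)
    + (∑ i, ∑ j, (u i x * u j x + v i x * v j x) * pd (WW φ A i) j x)
    + (∑ i, u i x * v i x) * (∑ j, v j x * pd φ j x)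
    + θ x * ∑ j, v j x * pd φ j x := rfl
  have hZ : ZZ R u v θ ψ (HH R A) x = R⁻¹ ^ 2 * S + R⁻¹ * (SA u x * S)
    + R⁻¹ * (|θ x| * SA v x) + ψ x ^ 4 * h * (SS u x + SS v x) + HH R A x := rfl
  rw [hR', hZ]
  have M2 : 0 ≤ M ^ 2 := sq_nonneg M
  clear_value h S
  clear hR' hZ su sv au av st S0 du dv d1 d2 wb h0 hsq p4 p40 p0 p1
  generalize R⁻¹ ^ 2 * S = Z1 at *
  generalize R⁻¹ * (SA u x * S) = Z2 at *
  generalize R⁻¹ * (|θ x| * SA v x) = Z3 at *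
  generalize ψ x ^ 4 * h * (SS u x + SS v x) = Z4 at *
  generalize HH R A x = Z5 at *
  linarith [mul_nonneg hM z1, mul_nonneg hM z2, mul_nonneg hM z3, mul_nonneg hM z4, mul_nonneg hM z5,
    mul_nonneg M2 z1, mul_nonneg M2 z2, mul_nonneg M2 z3, mul_nonneg M2 z4, mul_nonneg M2 z5]

lemma point_off {R : ℝ} {u v : Fin 3 → R3 → ℝ} {θ ψ : R3 → ℝ}
    {A : Fin 3 → Fin 3 → R3 → ℝ} (hA : ∀ i j, Sm (A i j)) (hψ : Cut R (2 * R) ψ) {x : R3} (hx : x ∉ Ann R) :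
    RHS u v θ (fun y => ψ y ^ 6) (WW (fun y => ψ y ^ 6) A) x = 0 := by
  have h := (hψ.pow 5).off hx
  simp only [show 5 + 1 = 6 from rfl] at h
  have hl : lap (fun y => ψ y ^ 6) x = 0 := by
    unfold lap; simp [h.2]
  unfold RHS
  simp only [WW_pd (hψ.pow 5).sm hA]
  simp [h.1, h.2, hl]

/-- everything about the solution, coordinates -/
structure Sol (u v : Fin 3 → R3 → ℝ) (π θ : R3 → ℝ) : Prop where
  hu : ∀ i, Sm (u i)
  hv : ∀ i, Sm (v i)
  hπ : Sm π
  hθ : Sm θ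
  h1 : ∀ i x, -lap (u i) x + (∑ j, u j x * pd (u i) j x) + pd π i x
      + (∑ j, pd (fun y => v j y * v i y) j x) = 0
  h2 : ∀ i x, -lap (v i) x + (∑ j, u j x * pd (v i) j x) + pd θ i x
      + (∑ j, v j x * pd (u i) j x) = 0
  h3 : ∀ x, -lap θ x + (∑ j, u j x * pd θ j x) + (∑ j, pd (v j) j x) = 0
  h4 : ∀ x, (∑ j, pd (u j) j x) = 0

lemma DD_cont {u v : Fin 3 → R3 → ℝ} {π θ : R3 → ℝ} (h : Sol u v π θ) : Continuous (DD u v θ) := by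
  have a := fun i j => ((h.hu i).pd j).cont
  have b := fun i j => ((h.hv i).pd j).cont
  have c := fun j => ((h.hθ).pd j).cont
  unfold DD; fun_prop

lemma localE : ∃ C, 0 ≤ C ∧ ∀ (u v : Fin 3 → R3 → ℝ) (π θ : R3 → ℝ), Sol u v π θ → ∀ R : ℝ, 0 < R →
    ∃ ψ G : R3 → ℝ, Cut R (2 * R) ψ ∧ (∀ i x, |pd ψ i x| ≤ C * R⁻¹) ∧ Continuous G ∧ (∀ x, 0 ≤ G x) ∧
      ∫ x in Ann R, G x ≤ C * (R⁻¹ ^ 2 * ∫ x in closedBall (0:R3) (R * 4), SS u x) ∧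
      ∫ x, ψ x ^ 6 * DD u v θ x ≤ C * ∫ x in Ann R, ZZ R u v θ ψ G x := by
  obtain ⟨C1, hC1, H1⟩ := potentialR
  obtain ⟨M, hM, H2⟩ := exists_cutR
  refine ⟨C1 + M + 2 * (18 * M + 162 * M ^ 2), by positivity, fun u v π θ hs R hR => ?_⟩
  obtain ⟨A, sA, aA, dA, bA⟩ := H1 u hs.hu hs.h4 R hR
  obtain ⟨ψ, hψ, p1, p2, p3⟩ := H2 R hR
  set K := 18 * M + 162 * M ^ 2 with hK
  have hK0 : 0 ≤ K := by positivity
  have cA := fun i j => (sA i j).cont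
  have cA' := fun i j k => ((sA i j).pd k).cont
  have cH : Continuous (HH R A) := by unfold HH; fun_prop
  have cu := fun i => (hs.hu i).cont
  have cv := fun i => (hs.hv i).cont
  have ct := hs.hθ.cont
  have cψ := hψ.sm.cont
  have cZ : Continuous (ZZ R u v θ ψ (HH R A)) := by unfold ZZ SS SA; fun_prop
  have cD := DD_cont hs
  have nZ : ∀ x, 0 ≤ ZZ R u v θ ψ (HH R A) x := by
    intro x
    have := SS_nn u x; have := SS_nn v x; have := SA_nn u x; have := SA_nn v x
    have := HH_nn R A x; have := hψ.nn x
    unfold ZZ; positivity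
  refine ⟨ψ, HH R A, hψ, fun i x => (p1 i x).trans ?_, cH, HH_nn R A, ?_, ?_⟩
  · gcongr; linarith
  · have hle : ∫ x in Ann R, HH R A x ≤ ∫ x in closedBall (0:R3) (R * 2), HH R A x := by
      refine setIntegral_mono_set (cint _ cH _) (Filter.Eventually.of_forall (HH_nn R A))
        (LE.le.eventuallyLE ?_)
      intro x hx
      have := hx.1
      rwa [mul_comm] at this
    refine (hle.trans bA).trans ?_
    have : 0 ≤ ∫ x in closedBall (0:R3) (R * 4), SS u x := integral_nonneg (SS_nn u)
    refine mul_le_mul_of_nonneg_right (by linarith) (mul_nonneg (by positivity) this)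
  · set φ : R3 → ℝ := fun y => ψ y ^ (5+1) with hφ
    have N : Nul (fun x => - (φ x * DD u v θ x) + RHS u v θ φ (WW φ A) x) :=
      energy hs.hu hs.hv hs.hπ hs.hθ hs.h1 hs.h2 hs.h3 hs.h4 (hψ.pow 5).sm (hψ.pow 5).hcs sA aA dA
    have cφ : Continuous φ := (hψ.pow 5).sm.cont
    have iD : Integrable (fun x => φ x * DD u v θ x) :=
      int_cc (by fun_prop) ((hψ.pow 5).hcs.mul_right)
    have iT := int_cc N.c N.s
    have iR : Integrable (fun x => RHS u v θ φ (WW φ A) x) := by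
      have := iT.add iD
      refine this.congr (Filter.Eventually.of_forall fun x => ?_)
      simp only [Pi.add_apply]
      ring
    have iDn : Integrable (fun x => -(φ x * DD u v θ x)) := iD.neg
    have e1 : ∫ x, φ x * DD u v θ x = ∫ x, RHS u v θ φ (WW φ A) x := by
      have := N.i
      rw [integral_add iDn iR, integral_neg] at this
      linarith
    have mA : MeasurableSet (Ann R) := (Ann_compact R).isClosed.measurableSet
    have iZ : IntegrableOn (ZZ R u v θ ψ (HH R A)) (Ann R) :=
      cZ.continuousOn.integrableOn_compact (Ann_compact R)
    have e2 : ∫ x, RHS u v θ φ (WW φ A) x = ∫ x in Ann R, RHS u v θ φ (WW φ A) x :=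
      (setIntegral_eq_integral_of_forall_compl_eq_zero fun x hx => point_off sA hψ hx).symm
    have e3 : ∫ x in Ann R, RHS u v θ φ (WW φ A) x ≤
        ∫ x in Ann R, (1/2 * (φ x * DD u v θ x) + K * ZZ R u v θ ψ (HH R A) x) := by
      refine setIntegral_mono_on iR.integrableOn ((iD.const_mul _).integrableOn.add (iZ.const_mul _)) mA
        fun x _ => ?_
      exact point hR hM sA hψ p2 p3 x
    rw [integral_add (iD.const_mul _).integrableOn (iZ.const_mul _), integral_const_mul,
      integral_const_mul] at e3
    have e4 : ∫ x in Ann R, φ x * DD u v θ x ≤ ∫ x, φ x * DD u v θ x := by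
      refine setIntegral_le_integral iD (Filter.Eventually.of_forall fun x => ?_)
      refine mul_nonneg ((hψ.pow 5).nn x) ?_
      unfold DD; positivity
    have e5 : 0 ≤ ∫ x in Ann R, ZZ R u v θ ψ (HH R A) x := integral_nonneg nZ
    change ∫ x, φ x * DD u v θ x ≤ _
    have e6 : ∫ x, φ x * DD u v θ x ≤ 2 * K * ∫ x in Ann R, ZZ R u v θ ψ (HH R A) x := by
      rw [e2] at e1; linarith
    refine e6.trans (mul_le_mul_of_nonneg_right (by linarith) e5)

lemma hol3 {S : Set R3} (hS : IsCompact S) {F G K : R3 → ℝ} (hF : Continuous F) (hG : Continuous G)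
    (hK : Continuous K) (F0 : ∀ x, 0 ≤ F x) (G0 : ∀ x, 0 ≤ G x) (K0 : ∀ x, 0 ≤ K x) {α β γ : ℝ}
    (hα : 0 ≤ α) (hβ : 0 ≤ β) (hγ : 0 ≤ γ) (h1 : α + β + γ = 1) :
    ∫ x in S, F x ^ α * G x ^ β * K x ^ γ ≤
      (∫ x in S, F x) ^ α * (∫ x in S, G x) ^ β * (∫ x in S, K x) ^ γ := by
  have iF : IntegrableOn F S := hF.continuousOn.integrableOn_compact hS
  have iG : IntegrableOn G S := hG.continuousOn.integrableOn_compact hS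
  have iK : IntegrableOn K S := hK.continuousOn.integrableOn_compact hS
  have cH : Continuous fun x => F x ^ α * G x ^ β * K x ^ γ :=
    ((hF.rpow_const fun _ => Or.inr hα).mul (hG.rpow_const fun _ => Or.inr hβ)).mul
      (hK.rpow_const fun _ => Or.inr hγ)
  have iH : IntegrableOn (fun x => F x ^ α * G x ^ β * K x ^ γ) S :=
    cH.continuousOn.integrableOn_compact hS
  have H0 : ∀ x, 0 ≤ F x ^ α * G x ^ β * K x ^ γ := fun x => by
    have := F0 x; have := G0 x; have := K0 x; positivity
  have nF : 0 ≤ ∫ x in S, F x := integral_nonneg F0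
  have nG : 0 ≤ ∫ x in S, G x := integral_nonneg G0
  have nK : 0 ≤ ∫ x in S, K x := integral_nonneg K0
  have key := ENNReal.lintegral_prod_norm_pow_le (μ := volume.restrict S) (Finset.univ : Finset (Fin 3))
    (f := ![fun x => ENNReal.ofReal (F x), fun x => ENNReal.ofReal (G x), fun x => ENNReal.ofReal (K x)])
    (p := ![α, β, γ]) (by
      intro i _
      fin_cases i
      · exact hF.measurable.ennreal_ofReal.aemeasurable
      · exact hG.measurable.ennreal_ofReal.aemeasurable
      · exact hK.measurable.ennreal_ofReal.aemeasurable)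
    (by simp [Fin.sum_univ_three, h1]) (by
      intro i _
      fin_cases i
      · exact hα
      · exact hβ
      · exact hγ)
  simp only [Fin.prod_univ_three, Matrix.cons_val_zero, Matrix.cons_val_one, Matrix.cons_val] at key
  rw [← ofReal_integral_eq_lintegral_ofReal iF (Eventually.of_forall F0),
    ← ofReal_integral_eq_lintegral_ofReal iG (Eventually.of_forall G0),
    ← ofReal_integral_eq_lintegral_ofReal iK (Eventually.of_forall K0),
    ENNReal.ofReal_rpow_of_nonneg nF hα, ENNReal.ofReal_rpow_of_nonneg nG hβ,
    ENNReal.ofReal_rpow_of_nonneg nK hγ, ← ENNReal.ofReal_mul (by positivity),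
    ← ENNReal.ofReal_mul (by positivity)] at key
  have e : ∀ x, ENNReal.ofReal (F x) ^ α * ENNReal.ofReal (G x) ^ β * ENNReal.ofReal (K x) ^ γ
      = ENNReal.ofReal (F x ^ α * G x ^ β * K x ^ γ) := fun x => by
    have f0 := F0 x; have g0 := G0 x; have k0 := K0 x
    rw [ENNReal.ofReal_rpow_of_nonneg f0 hα, ENNReal.ofReal_rpow_of_nonneg g0 hβ,
      ENNReal.ofReal_rpow_of_nonneg k0 hγ, ← ENNReal.ofReal_mul (by positivity),
      ← ENNReal.ofReal_mul (by positivity)]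
  simp only [e] at key
  rw [← ofReal_integral_eq_lintegral_ofReal iH (Eventually.of_forall H0)] at key
  exact (ENNReal.ofReal_le_ofReal_iff (by positivity)).1 key

def V0 : ℝ := (volume : Measure R3).real (closedBall (0:R3) 1)

lemma V0_nn : 0 ≤ V0 := measureReal_nonneg

lemma vol_ball {R : ℝ} (hR : 0 < R) : ∫ _x in closedBall (0:R3) R, (1:ℝ) = R ^ 3 * V0 := by
  have := scale_int (fun _ => 1) hR zero_le_one
  simp only [mul_one] at this
  have h3 : (0:ℝ) < R ^ 3 := by positivity
  rw [eq_comm, inv_mul_eq_iff_eq_mul₀ h3.ne'] at this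
  rw [this]
  congr 1
  simp [V0]

lemma Ann_sub (R : ℝ) : Ann R ⊆ closedBall 0 (2 * R) := Set.sdiff_subset

lemma Ann_mono {F : R3 → ℝ} (hF : Continuous F) (F0 : ∀ x, 0 ≤ F x) (R : ℝ) :
    ∫ x in Ann R, F x ≤ ∫ x in closedBall (0:R3) (2 * R), F x :=
  setIntegral_mono_set (cint F hF _) (Eventually.of_forall F0) (Ann_sub R).eventuallyLE

lemma vol_Ann {R : ℝ} (hR : 0 < R) : ∫ _x in Ann R, (1:ℝ) ≤ R ^ 3 * (8 * V0) := by
  refine (Ann_mono continuous_const (fun _ => zero_le_one) R).trans ?_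
  rw [vol_ball (by positivity)]
  apply le_of_eq; ring

lemma tail1 {F : R3 → ℝ} (hF : Integrable F) : Tendsto (fun R => ∫ x in Ann R, F x) atTop (nhds 0) := by
  have e : ∀ R, ∫ x in Ann R, F x = ∫ x, (Ann R).indicator F x := fun R =>
    (integral_indicator (Ann_compact R).measurableSet).symm
  simp only [e]
  have : (0:ℝ) = ∫ _x : R3, (0:ℝ) := by simp
  rw [this]
  refine tendsto_integral_filter_of_dominated_convergence (fun x => ‖F x‖) ?_ ?_ hF.norm ?_
  · exact Eventually.of_forall fun R => hF.aestronglyMeasurable.indicator (Ann_compact R).measurableSet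
  · exact Eventually.of_forall fun R => Eventually.of_forall fun x => norm_indicator_le_norm_self _ _
  · refine Eventually.of_forall fun x => ?_
    refine tendsto_const_nhds.congr' ?_
    filter_upwards [eventually_gt_atTop ‖x‖] with R hR
    rw [Set.indicator_of_notMem]
    intro h
    exact h.2 (by simpa using hR)

lemma Ann_nn {F : R3 → ℝ} (F0 : ∀ x, 0 ≤ F x) (R : ℝ) : 0 ≤ ∫ x in Ann R, F x := integral_nonneg F0

lemma tail2 {F G : R3 → ℝ} (hF : Continuous F) (hG : Continuous G) (F0 : ∀ x, 0 ≤ F x)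
    (G0 : ∀ x, 0 ≤ G x) (iF : Integrable F) (iG : Integrable G) {α β : ℝ} (hα : 0 < α) (hβ : 0 ≤ β)
    (hγ : α + β ≤ 1) {n : ℕ} (hn : 3 * (1 - α - β) ≤ n) :
    Tendsto (fun R : ℝ => R⁻¹ ^ n * ∫ x in Ann R, F x ^ α * G x ^ β) atTop (nhds 0) := by
  set K := (∫ x, G x) ^ β * (8 * V0) ^ (1 - α - β) with hK
  have t : Tendsto (fun R => (∫ x in Ann R, F x) ^ α * K) atTop (nhds 0) := by
    have := ((tail1 iF).rpow_const (p := α) (Or.inr hα.le)).mul_const K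
    rwa [Real.zero_rpow hα.ne', zero_mul] at this
  refine squeeze_zero' ?_ ?_ t
  · filter_upwards [eventually_ge_atTop 1] with R hR
    have : 0 ≤ ∫ x in Ann R, F x ^ α * G x ^ β := Ann_nn (fun x => by
      have := F0 x; have := G0 x; positivity) R
    positivity
  · filter_upwards [eventually_ge_atTop 1] with R hR
    have h := hol3 (Ann_compact R) hF hG (continuous_const (y := (1:ℝ))) F0 G0 (fun _ => zero_le_one)
      hα.le hβ (by linarith : 0 ≤ 1 - α - β) (by ring)
    simp only [Real.one_rpow, mul_one] at h
    have f0 := Ann_nn F0 R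
    have g0 := Ann_nn G0 R
    have o0 : 0 ≤ ∫ _x in Ann R, (1:ℝ) := Ann_nn (fun _ => zero_le_one) R
    have R0 : 0 < R := by linarith
    have gle : (∫ x in Ann R, G x) ^ β ≤ (∫ x, G x) ^ β :=
      Real.rpow_le_rpow g0 (setIntegral_le_integral iG (Eventually.of_forall G0)) hβ
    have ole : (∫ _x in Ann R, (1:ℝ)) ^ (1 - α - β) ≤ R ^ n * (8 * V0) ^ (1 - α - β) := by
      refine (Real.rpow_le_rpow o0 (vol_Ann R0) (by linarith)).trans ?_
      have := V0_nn
      rw [Real.mul_rpow (by positivity) (by positivity)]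
      refine mul_le_mul_of_nonneg_right ?_ (by positivity)
      rw [← Real.rpow_natCast, ← Real.rpow_mul R0.le, ← Real.rpow_natCast R n]
      exact Real.rpow_le_rpow_of_exponent_le hR (by push_cast; linarith)
    have V := V0_nn
    have iG0 : 0 ≤ ∫ x, G x := integral_nonneg G0
    calc R⁻¹ ^ n * ∫ x in Ann R, F x ^ α * G x ^ β
        ≤ R⁻¹ ^ n * ((∫ x in Ann R, F x) ^ α * (∫ x, G x) ^ β * (R ^ n * (8 * V0) ^ (1 - α - β))) := by
          refine mul_le_mul_of_nonneg_left (h.trans ?_) (by positivity)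
          gcongr
      _ = (∫ x in Ann R, F x) ^ α * K := by
          rw [hK, inv_pow]; field_simp

lemma hcs_zero {X Y : Type*} [Zero X] [Zero Y] {f : R3 → X} {g : R3 → Y} (hf : HasCompactSupport f)
    (h : ∀ x, f x = 0 → g x = 0) : HasCompactSupport g :=
  hf.mono fun x hx hf0 => hx (h x hf0)

lemma fd_sq {f : R3 → ℝ} (x : R3) : ‖fderiv ℝ f x‖ ^ 2 ≤ ∑ j, pd f j x ^ 2 := by
  have h : ‖fderiv ℝ f x‖ ≤ Real.sqrt (∑ j, pd f j x ^ 2) := by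
    refine ContinuousLinearMap.opNorm_le_bound _ (Real.sqrt_nonneg _) fun y => ?_
    rw [fderiv_eq_sum, EuclideanSpace.norm_eq, Real.norm_eq_abs, ← Real.sqrt_mul (Finset.sum_nonneg fun _ _ => sq_nonneg _)]
    refine Real.abs_le_sqrt ?_
    rw [mul_comm]
    simp only [Real.norm_eq_abs, sq_abs]
    exact Finset.sum_mul_sq_le_sq_mul_sq _ _ _
  calc _ ≤ Real.sqrt (∑ j, pd f j x ^ 2) ^ 2 := by gcongr
    _ = _ := Real.sq_sqrt (Finset.sum_nonneg fun _ _ => sq_nonneg _)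

lemma sobolev : ∃ C, 0 ≤ C ∧ ∀ g : R3 → ℝ, Sm g → HasCompactSupport g →
    ∫ x, g x ^ 6 ≤ C * (∫ x, ∑ j, pd g j x ^ 2) ^ 3 := by
  set c : NNReal := SNormLESNormFDerivOfEqConst ℝ (volume : Measure R3) ((2:NNReal):ℝ) with hc
  refine ⟨(c:ℝ) ^ 6, by positivity, fun g hg hs => ?_⟩
  have h1 : ContDiff ℝ 1 g := hg.of_le (by exact_mod_cast le_top)
  have k := eLpNorm_le_eLpNorm_fderiv_of_eq (μ := (volume : Measure R3)) (p := 2) (p' := 6) h1 hs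
    (by norm_num) (by simp) (by simp; norm_num)
  have m1 : MemLp g 6 (volume : Measure R3) := hg.cont.memLp_of_hasCompactSupport hs
  have cf : Continuous (fderiv ℝ g) := h1.continuous_fderiv (by norm_num)
  have m2 : MemLp (fderiv ℝ g) 2 (volume : Measure R3) :=
    cf.memLp_of_hasCompactSupport (hs.fderiv ℝ)
  have e6 : ((6 : NNReal) : ENNReal) = 6 := rfl
  have e2 : ((2 : NNReal) : ENNReal) = 2 := rfl
  rw [e6, e2, m1.eLpNorm_eq_integral_rpow_norm (by norm_num) (by norm_num),
    m2.eLpNorm_eq_integral_rpow_norm (by norm_num) (by norm_num), ← hc,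
    ← ENNReal.ofReal_coe_nnreal, ← ENNReal.ofReal_mul (by positivity),
    ENNReal.ofReal_le_ofReal_iff (by positivity)] at k
  have t6 : (6 : ENNReal).toReal = ((6:ℕ):ℝ) := by norm_num
  have t2 : (2 : ENNReal).toReal = ((2:ℕ):ℝ) := by norm_num
  simp only [t6, t2, Real.rpow_natCast] at k
  set A := ∫ a, ‖g a‖ ^ 6 with hA
  set B := ∫ a, ‖fderiv ℝ g a‖ ^ 2 with hB
  have A0 : 0 ≤ A := integral_nonneg fun _ => by positivity
  have B0 : 0 ≤ B := integral_nonneg fun _ => by positivity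
  have eA : ∫ x, g x ^ 6 = A := by
    rw [hA]; congr 1; ext x; rw [Real.norm_eq_abs]; exact (Even.pow_abs (by decide) _).symm
  have hBle : B ≤ ∫ x, ∑ j, pd g j x ^ 2 := by
    refine integral_mono ?_ ?_ fun x => fd_sq x
    · exact int_cc (cf.norm.pow 2) (hcs_zero (hs.fderiv ℝ) (fun x hx => by simp [hx]))
    · refine integrable_finsetSum _ fun j _ => ?_
      exact int_cc ((hg.pd j).cont.pow 2) (hcs_zero (hcs_pd hs j) (fun x hx => by simp [hx]))
  rw [eA]
  have := pow_le_pow_left₀ (by positivity) k 6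
  rw [Real.rpow_inv_natCast_pow A0 (by norm_num), mul_pow,
    show (B ^ (((2:ℕ):ℝ))⁻¹) ^ 6 = ((B ^ (((2:ℕ):ℝ))⁻¹) ^ 2) ^ 3 by ring,
    Real.rpow_inv_natCast_pow B0 (by norm_num)] at this
  refine this.trans ?_
  gcongr

structure Sml (D : ℝ → ℝ) (X : ℝ → R3 → ℝ) : Prop where
  cont : ∀ R, 1 ≤ R → Continuous (X R)
  bd : ∃ δ : ℝ → ℝ, Tendsto δ atTop (nhds 0) ∧ ∀ᶠ R in atTop, ∫ x in Ann R, X R x ≤ δ R * (1 + D R)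

lemma aint {g : R3 → ℝ} (hg : Continuous g) (R : ℝ) : IntegrableOn g (Ann R) :=
  hg.continuousOn.integrableOn_compact (Ann_compact R)

lemma Sml.add {D : ℝ → ℝ} {X Y : ℝ → R3 → ℝ} (hX : Sml D X) (hY : Sml D Y) :
    Sml D (fun R x => X R x + Y R x) := by
  obtain ⟨δ, h1, h2⟩ := hX.bd
  obtain ⟨ε, h3, h4⟩ := hY.bd
  refine ⟨fun R hR => (hX.cont R hR).add (hY.cont R hR), fun R => δ R + ε R, by simpa using h1.add h3, ?_⟩
  filter_upwards [h2, h4, eventually_ge_atTop 1] with R a b hR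
  rw [integral_add (aint (hX.cont R hR) R) (aint (hY.cont R hR) R)]
  linarith

lemma Sml.sum {D : ℝ → ℝ} {X : Fin 3 → ℝ → R3 → ℝ} (hX : ∀ i, Sml D (X i)) :
    Sml D (fun R x => ∑ i, X i R x) := by
  simp only [Fin.sum_univ_three]
  exact ((hX 0).add (hX 1)).add (hX 2)

lemma Sml.of_tendsto {D : ℝ → ℝ} (hD : ∀ R, 0 ≤ D R) {X : ℝ → R3 → ℝ} (hc : ∀ R, 1 ≤ R → Continuous (X R))
    (h : Tendsto (fun R => ∫ x in Ann R, X R x) atTop (nhds 0)) : Sml D X := by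
  refine ⟨hc, fun R => |∫ x in Ann R, X R x|, by simpa using h.abs, Eventually.of_forall fun R => ?_⟩
  have a := le_abs_self (∫ x in Ann R, X R x)
  have b := abs_nonneg (∫ x in Ann R, X R x)
  nlinarith [hD R]

lemma rp (a : ℝ) {s : ℝ} (hs : 0 < s) (k : ℕ) : (|a| ^ s) ^ ((k:ℝ) / s) = |a| ^ k := by
  rw [← Real.rpow_mul (abs_nonneg a), mul_div_cancel₀ _ hs.ne', Real.rpow_natCast]

lemma rp1 (a : ℝ) {s : ℝ} (hs : 0 < s) : (|a| ^ s) ^ (1 / s) = |a| := by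
  have := rp a hs 1
  simpa using this

lemma rp2 (a : ℝ) {s : ℝ} (hs : 0 < s) : (|a| ^ s) ^ (2 / s) = a ^ 2 := by
  have := rp a hs 2
  simpa using this

/-- continuity and integrability -/
structure Li (s : ℝ) (f : R3 → ℝ) : Prop where
  c : Continuous f
  i : Integrable fun x => |f x| ^ s

lemma Li.cp {s : ℝ} {f : R3 → ℝ} (h : Li s f) (hs : 0 ≤ s) : Continuous fun x => |f x| ^ s :=
  h.c.abs.rpow_const fun _ => Or.inr hs

lemma ab0 (s : ℝ) (f : R3 → ℝ) (x : R3) : 0 ≤ |f x| ^ s := Real.rpow_nonneg (abs_nonneg _) _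

lemma T1 {s : ℝ} {f : R3 → ℝ} (h : Li s f) (h2 : 2 ≤ s) (h6 : s ≤ 6) :
    Tendsto (fun R : ℝ => R⁻¹ ^ 2 * ∫ x in Ann R, f x ^ 2) atTop (nhds 0) := by
  have s0 : 0 < s := by linarith
  have := tail2 (n := 2) (h.cp s0.le) (continuous_const (y := (0:ℝ))) (ab0 s f) (fun _ => le_rfl) h.i
    (integrable_zero _ _ _) (α := 2 / s) (β := 0) (by positivity) le_rfl
    (by rw [add_zero, div_le_one s0]; exact h2) (by
      have : 1 / 3 ≤ 2 / s := by rw [div_le_div_iff₀ (by norm_num) s0]; linarith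
      push_cast; linarith)
  simpa only [Real.rpow_zero, mul_one, rp2 _ s0] using this

lemma T2 {s p : ℝ} {f g : R3 → ℝ} (h : Li s f) (hg : Li p g) (s0 : 0 < s) (p0 : 0 < p)
    (h1 : 1 / p + 2 / s ≤ 1) (h2 : 2 / 3 ≤ 1 / p + 2 / s) :
    Tendsto (fun R : ℝ => R⁻¹ ^ 1 * ∫ x in Ann R, |g x| * f x ^ 2) atTop (nhds 0) := by
  have := tail2 (n := 1) (hg.cp p0.le) (h.cp s0.le) (ab0 p g) (ab0 s f) hg.i h.i
    (α := 1 / p) (β := 2 / s) (by positivity) (by positivity) h1 (by push_cast; linarith)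
  simpa only [rp1 _ p0, rp2 _ s0] using this

lemma T3 {s p : ℝ} {f g : R3 → ℝ} (h : Li s f) (hg : Li p g) (s0 : 0 < s) (p0 : 0 < p)
    (h1 : 1 / p + 1 / s ≤ 1) (h2 : 2 / 3 ≤ 1 / p + 1 / s) :
    Tendsto (fun R : ℝ => R⁻¹ ^ 1 * ∫ x in Ann R, |g x| * |f x|) atTop (nhds 0) := by
  have := tail2 (n := 1) (hg.cp p0.le) (h.cp s0.le) (ab0 p g) (ab0 s f) hg.i h.i
    (α := 1 / p) (β := 1 / s) (by positivity) (by positivity) h1 (by push_cast; linarith)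
  simpa only [rp1 _ p0, rp1 _ s0] using this

lemma ball2 {p : ℝ} {f : R3 → ℝ} (h : Li p f) (hp : 3 ≤ p) : ∃ K, 0 ≤ K ∧ ∀ R : ℝ, 1 ≤ R →
    R⁻¹ ^ 2 * ∫ x in closedBall (0:R3) (R * 4), f x ^ 2 ≤ K * R ^ (1 - 6 / p) := by
  have p0 : 0 < p := by linarith
  have V := V0_nn
  have e2 : 2 / p ≤ 1 := by rw [div_le_one p0]; linarith
  have I0 : 0 ≤ ∫ x, |f x| ^ p := integral_nonneg (ab0 p f)
  refine ⟨(∫ x, |f x| ^ p) ^ (2 / p) * (64 * V0) ^ (1 - 2 / p), by positivity, fun R hR => ?_⟩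
  have R0 : 0 < R := by linarith
  have k := hol3 (isCompact_closedBall (0:R3) (R * 4)) (h.cp p0.le) (continuous_const (y := (0:ℝ)))
    (continuous_const (y := (1:ℝ))) (ab0 p f) (fun _ => le_rfl) (fun _ => zero_le_one)
    (α := 2 / p) (β := 0) (γ := 1 - 2 / p) (by positivity) le_rfl (by linarith) (by ring)
  simp only [Real.rpow_zero, Real.one_rpow, mul_one, rp2 _ p0] at k
  rw [vol_ball (by positivity)] at k
  have l : (∫ x in closedBall (0:R3) (R * 4), |f x| ^ p) ^ (2 / p) ≤ (∫ x, |f x| ^ p) ^ (2 / p) :=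
    Real.rpow_le_rpow (integral_nonneg (ab0 p f))
      (setIntegral_le_integral h.i (Eventually.of_forall (ab0 p f))) (by positivity)
  have m : ((R * 4) ^ 3 * V0) ^ (1 - 2 / p) = (64 * V0) ^ (1 - 2 / p) * R ^ (3 - 6 / p) := by
    rw [show (R * 4) ^ 3 * V0 = (64 * V0) * R ^ 3 by ring, Real.mul_rpow (by positivity) (by positivity),
      ← Real.rpow_natCast R 3, ← Real.rpow_mul R0.le]
    congr 2; push_cast; ring
  have n : R⁻¹ ^ 2 * R ^ (3 - 6 / p) = R ^ (1 - 6 / p) := by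
    rw [inv_pow, ← Real.rpow_natCast R 2, ← Real.rpow_neg R0.le, ← Real.rpow_add R0]
    congr 1; push_cast; ring
  calc _ ≤ R⁻¹ ^ 2 * ((∫ x, |f x| ^ p) ^ (2 / p) * ((64 * V0) ^ (1 - 2 / p) * R ^ (3 - 6 / p))) := by
        refine mul_le_mul_of_nonneg_left (k.trans ?_) (by positivity)
        rw [m]
        exact mul_le_mul_of_nonneg_right l (by positivity)
    _ = (∫ x, |f x| ^ p) ^ (2 / p) * (64 * V0) ^ (1 - 2 / p) * (R⁻¹ ^ 2 * R ^ (3 - 6 / p)) := by ring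
    _ = _ := by rw [n]

lemma T4a {s m K : ℝ} {f : R3 → ℝ} (h : Li s f) (h4 : 4 ≤ s) (hK : 0 ≤ K) {ψ G : ℝ → R3 → ℝ}
    (hψ : ∀ R, 1 ≤ R → Cut R (2 * R) (ψ R)) (hG : ∀ R, 1 ≤ R → Continuous (G R))
    (G0 : ∀ R, 1 ≤ R → ∀ x, 0 ≤ G R x)
    (hb : ∀ R, 1 ≤ R → ∫ x in Ann R, G R x ≤ K * R ^ m) (hm : m / 2 + 3 * (1 / 2 - 2 / s) ≤ 0) :
    Tendsto (fun R => ∫ x in Ann R, ψ R x ^ 4 * Real.sqrt (G R x) * f x ^ 2) atTop (nhds 0) := by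
  have s0 : 0 < s := by linarith
  have V := V0_nn
  have e2 : 2 / s ≤ 1 / 2 := by rw [div_le_div_iff₀ s0 (by norm_num)]; linarith
  set L := K ^ ((1:ℝ) / 2) * (8 * V0) ^ (1 / 2 - 2 / s) with hL
  have t : Tendsto (fun R => (∫ x in Ann R, |f x| ^ s) ^ (2 / s) * L) atTop (nhds 0) := by
    have := ((tail1 h.i).rpow_const (p := 2 / s) (Or.inr (by positivity))).mul_const L
    rwa [Real.zero_rpow (by positivity), zero_mul] at this
  refine squeeze_zero' ?_ ?_ t
  · filter_upwards [eventually_ge_atTop 1] with R hR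
    refine Ann_nn (fun x => ?_) R
    have := (hψ R hR).nn x
    positivity
  · filter_upwards [eventually_ge_atTop 1] with R hR
    have R0 : 0 < R := by linarith
    have k := hol3 (Ann_compact R) (h.cp s0.le) (hG R hR) (continuous_const (y := (1:ℝ))) (ab0 s f)
      (G0 R hR) (fun _ => zero_le_one) (α := 2 / s) (β := 1 / 2) (γ := 1 / 2 - 2 / s) (by positivity)
      (by norm_num) (by linarith) (by ring)
    simp only [Real.one_rpow, mul_one, rp2 _ s0, ← Real.sqrt_eq_rpow] at k
    have hc : Continuous fun x => Real.sqrt (G R x) := (hG R hR).sqrt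
    have q : ∫ x in Ann R, ψ R x ^ 4 * Real.sqrt (G R x) * f x ^ 2 ≤
        ∫ x in Ann R, f x ^ 2 * Real.sqrt (G R x) := by
      refine setIntegral_mono (aint ((((hψ R hR).sm.cont.pow 4).mul hc).mul (h.c.pow 2)) R)
        (aint ((h.c.pow 2).mul hc) R) fun x => ?_
      have := (hψ R hR).nn x
      have p4 : ψ R x ^ 4 ≤ 1 := pow_le_one₀ this ((hψ R hR).le x)
      have : 0 ≤ Real.sqrt (G R x) * f x ^ 2 := by positivity
      show ψ R x ^ 4 * Real.sqrt (G R x) * f x ^ 2 ≤ f x ^ 2 * Real.sqrt (G R x)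
      nlinarith
    refine (q.trans k).trans ?_
    rw [mul_assoc]
    refine mul_le_mul_of_nonneg_left ?_ (Real.rpow_nonneg (Ann_nn (ab0 s f) R) _)
    have a : Real.sqrt (∫ x in Ann R, G R x) ≤ K ^ ((1:ℝ) / 2) * R ^ (m / 2) := by
      refine (Real.sqrt_le_sqrt (hb R hR)).trans ?_
      rw [Real.sqrt_eq_rpow, Real.mul_rpow hK (by positivity), ← Real.rpow_mul R0.le]
      apply le_of_eq; congr 2; ring
    have b : (∫ _x in Ann R, (1:ℝ)) ^ (1 / 2 - 2 / s) ≤ R ^ (3 * (1 / 2 - 2 / s)) * (8 * V0) ^ (1 / 2 - 2 / s) := by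
      refine (Real.rpow_le_rpow (Ann_nn (fun _ => zero_le_one) R) (vol_Ann R0) (by linarith)).trans ?_
      rw [Real.mul_rpow (by positivity) (by positivity), ← Real.rpow_natCast, ← Real.rpow_mul R0.le]
      push_cast; exact le_rfl
    calc _ ≤ (K ^ ((1:ℝ) / 2) * R ^ (m / 2)) * (R ^ (3 * (1 / 2 - 2 / s)) * (8 * V0) ^ (1 / 2 - 2 / s)) := by
          refine mul_le_mul a b (Real.rpow_nonneg (Ann_nn (fun _ => zero_le_one) R) _) (by positivity)
      _ = L * R ^ (m / 2 + 3 * (1 / 2 - 2 / s)) := by rw [Real.rpow_add R0]; ring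
      _ ≤ L * 1 := by
          refine mul_le_mul_of_nonneg_left ?_ (by positivity)
          exact Real.rpow_le_one_of_one_le_of_nonpos hR hm
      _ = L := mul_one _

lemma grad_loc {C R : ℝ} (hC : 0 ≤ C) (hR : 1 ≤ R) {ψ f : R3 → ℝ} (hψ : Cut R (2 * R) ψ)
    (hd : ∀ i x, |pd ψ i x| ≤ C * R⁻¹) (hf : Sm f) :
    ∫ x, ∑ j, pd (fun y => ψ y ^ 3 * f y) j x ^ 2 ≤
      54 * C ^ 2 * (R⁻¹ ^ 2 * ∫ x in Ann R, f x ^ 2) + 2 * ∫ x, ψ x ^ 6 * ∑ j, pd f j x ^ 2 := by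
  have R0 : 0 < R := by linarith
  have e : ∀ j x, pd (fun y => ψ y ^ 3 * f y) j x = 3 * ψ x ^ 2 * pd ψ j x * f x + ψ x ^ 3 * pd f j x := by
    intro j x
    rw [pd_mul (hψ.sm.pow 3) hf, pd_pow hψ.sm 2]
    push_cast; ring
  have c2 : Continuous fun x => ψ x ^ 6 * ∑ j, pd f j x ^ 2 :=
    (hψ.sm.cont.pow 6).mul (continuous_finsetSum _ fun j _ => (hf.pd j).cont.pow 2)
  have i2 : Integrable fun x => ψ x ^ 6 * ∑ j, pd f j x ^ 2 :=
    int_cc c2 (hcs_zero hψ.hcs fun x hx => by simp [hx])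
  have c1 : Continuous fun x => 54 * C ^ 2 * R⁻¹ ^ 2 * f x ^ 2 := continuous_const.mul (hf.cont.pow 2)
  have i1 : Integrable ((Ann R).indicator fun x => 54 * C ^ 2 * R⁻¹ ^ 2 * f x ^ 2) :=
    (aint c1 R).integrable_indicator (Ann_compact R).measurableSet
  have i3 : Integrable fun x => ∑ j, pd (fun y => ψ y ^ 3 * f y) j x ^ 2 := by
    have hs : Sm fun y => ψ y ^ 3 * f y := (hψ.sm.pow 3).mul hf
    have hc : HasCompactSupport fun y => ψ y ^ 3 * f y := hcs_zero hψ.hcs fun x hx => by simp [hx]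
    refine integrable_finsetSum _ fun j _ => ?_
    exact int_cc ((hs.pd j).cont.pow 2) (hcs_zero (hcs_pd hc j) fun x hx => by simp [hx])
  have key : ∫ x, ∑ j, pd (fun y => ψ y ^ 3 * f y) j x ^ 2 ≤
      ∫ x, ((Ann R).indicator (fun x => 54 * C ^ 2 * R⁻¹ ^ 2 * f x ^ 2) x + 2 * (ψ x ^ 6 * ∑ j, pd f j x ^ 2)) := by
    refine integral_mono i3 (i1.add (i2.const_mul 2)) fun x => ?_
    show ∑ j, pd (fun y => ψ y ^ 3 * f y) j x ^ 2 ≤ (Ann R).indicator (fun x => 54 * C ^ 2 * R⁻¹ ^ 2 * f x ^ 2) x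
      + 2 * (ψ x ^ 6 * ∑ j, pd f j x ^ 2)
    by_cases hx : x ∈ Ann R
    · rw [Set.indicator_of_mem hx]
      have : ∀ j, pd (fun y => ψ y ^ 3 * f y) j x ^ 2 ≤ 18 * C ^ 2 * R⁻¹ ^ 2 * f x ^ 2 + 2 * (ψ x ^ 6 * pd f j x ^ 2) := by
        intro j
        rw [e j x]
        have p0 := hψ.nn x
        have p4 : ψ x ^ 4 ≤ 1 := pow_le_one₀ p0 (hψ.le x)
        have d : pd ψ j x ^ 2 ≤ (C * R⁻¹) ^ 2 := sq_le_sq' (by linarith [abs_le.1 (hd j x)]) (abs_le.1 (hd j x)).2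
        have a1 : ψ x ^ 4 * pd ψ j x ^ 2 ≤ 1 * (C * R⁻¹) ^ 2 := mul_le_mul p4 d (sq_nonneg _) zero_le_one
        have a2 : ψ x ^ 4 * pd ψ j x ^ 2 * f x ^ 2 ≤ 1 * (C * R⁻¹) ^ 2 * f x ^ 2 :=
          mul_le_mul_of_nonneg_right a1 (sq_nonneg _)
        nlinarith [sq_nonneg (3 * ψ x ^ 2 * pd ψ j x * f x - ψ x ^ 3 * pd f j x)]
      simp only [Fin.sum_univ_three]
      linarith [this 0, this 1, this 2]
    · rw [Set.indicator_of_notMem hx]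
      have o := (hψ.off hx).1
      simp only [e, o, Fin.sum_univ_three]
      have : 0 ≤ ψ x ^ 6 * (pd f 0 x ^ 2 + pd f 1 x ^ 2 + pd f 2 x ^ 2) := by
        have := hψ.nn x
        positivity
      nlinarith
  refine key.trans (le_of_eq ?_)
  rw [integral_add i1 (i2.const_mul 2), integral_indicator (Ann_compact R).measurableSet,
    integral_const_mul, integral_const_mul]
  ring

lemma T4b {s m K C : ℝ} {f : R3 → ℝ} (hf : Sm f) (h : Li s f) (hs1 : 12 / 5 ≤ s) (h4 : s ≤ 4) (hK : 0 ≤ K)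
    (hC : 0 ≤ C) {ψ G : ℝ → R3 → ℝ} {D : ℝ → ℝ}
    (hψ : ∀ R, 1 ≤ R → Cut R (2 * R) (ψ R)) (hd : ∀ R, 1 ≤ R → ∀ i x, |pd (ψ R) i x| ≤ C * R⁻¹)
    (hG : ∀ R, 1 ≤ R → Continuous (G R))
    (G0 : ∀ R, 1 ≤ R → ∀ x, 0 ≤ G R x)
    (hD : ∀ R, 1 ≤ R → ∫ x, ψ R x ^ 6 * ∑ j, pd f j x ^ 2 ≤ D R) (hD0 : ∀ R, 0 ≤ D R)
    (hb : ∀ R, 1 ≤ R → ∫ x in Ann R, G R x ≤ K * R ^ m) (hm : m < 0) :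
    Sml D (fun R x => ψ R x ^ 4 * Real.sqrt (G R x) * f x ^ 2) := by
  have s0 : 0 < s := by linarith
  obtain ⟨Cs, Cs0, sob⟩ := sobolev
  have s6 : 0 < 6 - s := by linarith
  set y := (4 - s) / (2 * (6 - s)) with hy
  set z := 1 / (6 - s) with hz
  have y0 : 0 ≤ y := div_nonneg (by linarith) (by linarith)
  have z0 : 0 ≤ z := by positivity
  have yz : z + y = 1 / 2 := by rw [hy, hz]; field_simp; ring
  have ye : s * z + 6 * y = 2 := by rw [hy, hz]; field_simp; ring
  have y29 : 18 * y ≤ 4 := by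
    have : y ≤ 2 / 9 := by rw [hy, div_le_div_iff₀ (by linarith) (by norm_num)]; linarith
    linarith
  have cX : ∀ R, 1 ≤ R → Continuous fun x => ψ R x ^ 4 * Real.sqrt (G R x) * f x ^ 2 := fun R hR =>
    (((hψ R hR).sm.cont.pow 4).mul (hG R hR).sqrt).mul (hf.cont.pow 2)
  set I := ∫ x, |f x| ^ s with hI
  have I0 : 0 ≤ I := integral_nonneg (ab0 s f)
  set L := I ^ z * (Cs ^ y * 2 ^ (3 * y)) * K ^ ((1:ℝ) / 2) with hL
  refine ⟨cX, fun R => L * R ^ (m / 2), ?_, ?_⟩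
  · have : Tendsto (fun R : ℝ => R ^ (m / 2)) atTop (nhds 0) := by
      have := tendsto_rpow_neg_atTop (y := - (m / 2)) (by linarith)
      simpa using this
    simpa using this.const_mul L
  have t1 : Tendsto (fun R : ℝ => 54 * C ^ 2 * (R⁻¹ ^ 2 * ∫ x in Ann R, f x ^ 2)) atTop (nhds 0) := by
    simpa using (T1 h (by linarith) (by linarith)).const_mul (54 * C ^ 2)
  filter_upwards [eventually_ge_atTop 1, t1.eventually (gt_mem_nhds (show (0:ℝ) < 2 by norm_num))] with R hR hsm
  have R0 : 0 < R := by linarith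
  have hc := hψ R hR
  set Q : R3 → ℝ := fun x => ψ R x ^ 3 * f x with hQ
  have sQ : Sm Q := (hc.sm.pow 3).mul hf
  have hQc : HasCompactSupport Q := hcs_zero hc.hcs fun x hx => by simp [hQ, hx]
  have g1 := grad_loc hC hR hc (hd R hR) hf
  have g2 := sob Q sQ hQc
  have cQ : Continuous fun x => Q x ^ 6 := sQ.cont.pow 6
  have Q0 : ∀ x, 0 ≤ Q x ^ 6 := fun x => by positivity
  have k := hol3 (Ann_compact R) (h.cp s0.le) cQ (hG R hR) (ab0 s f) Q0 (G0 R hR)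
    (α := z) (β := y) (γ := 1 / 2) z0 y0 (by norm_num) (by linarith)
  have cY : Continuous fun x => (|f x| ^ s) ^ z * (Q x ^ 6) ^ y * G R x ^ ((1:ℝ) / 2) :=
    (((h.cp s0.le).rpow_const fun _ => Or.inr z0).mul (cQ.rpow_const fun _ => Or.inr y0)).mul
      ((hG R hR).rpow_const fun _ => Or.inr (by norm_num))
  have q : ∫ x in Ann R, ψ R x ^ 4 * Real.sqrt (G R x) * f x ^ 2 ≤
      ∫ x in Ann R, (|f x| ^ s) ^ z * (Q x ^ 6) ^ y * G R x ^ ((1:ℝ) / 2) := by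
    refine setIntegral_mono (aint (cX R hR) R) (aint cY R) fun x => ?_
    show ψ R x ^ 4 * Real.sqrt (G R x) * f x ^ 2 ≤ (|f x| ^ s) ^ z * (Q x ^ 6) ^ y * G R x ^ ((1:ℝ) / 2)
    have p0 := hc.nn x
    have p1 := hc.le x
    have e1 : Q x ^ 6 = ψ R x ^ 18 * |f x| ^ 6 := by
      rw [hQ, Even.pow_abs (by decide)]; ring
    have a0 := abs_nonneg (f x)
    have e2 : (|f x| ^ s) ^ z * (Q x ^ 6) ^ y = ψ R x ^ (18 * y) * f x ^ 2 := by
      rw [e1, Real.mul_rpow (by positivity) (by positivity), ← Real.rpow_natCast (ψ R x), ← Real.rpow_mul p0,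
        ← Real.rpow_natCast |f x|, ← Real.rpow_mul a0, ← Real.rpow_mul a0,
        mul_left_comm, ← Real.rpow_add_of_nonneg a0 (by positivity) (by positivity)]
      push_cast
      rw [ye, ← sq_abs (f x), Real.rpow_two]
    rw [e2, ← Real.sqrt_eq_rpow]
    have e3 : ψ R x ^ 4 ≤ ψ R x ^ (18 * y) := by
      rw [← Real.rpow_natCast]
      exact Real.rpow_le_rpow_of_exponent_ge' p0 p1 (by positivity) (by push_cast; exact y29)
    have : 0 ≤ Real.sqrt (G R x) * f x ^ 2 := by positivity
    nlinarith
  refine (q.trans k).trans ?_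
  have a1 : (∫ x in Ann R, |f x| ^ s) ^ z ≤ I ^ z :=
    Real.rpow_le_rpow (Ann_nn (ab0 s f) R) (setIntegral_le_integral h.i (Eventually.of_forall (ab0 s f))) z0
  have D1 := hD0 R
  have a2 : (∫ x in Ann R, Q x ^ 6) ^ y ≤ (Cs ^ y * 2 ^ (3 * y)) * (1 + D R) := by
    have b1 : ∫ x in Ann R, Q x ^ 6 ≤ Cs * (2 * (1 + D R)) ^ 3 := by
      refine (setIntegral_le_integral (int_cc cQ (hcs_zero hQc fun x hx => by simp [hx]))
        (Eventually.of_forall Q0)).trans (g2.trans ?_)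
      refine mul_le_mul_of_nonneg_left (pow_le_pow_left₀ (integral_nonneg fun x =>
        Finset.sum_nonneg fun j _ => sq_nonneg _) ?_ 3) Cs0
      have := hD R hR
      have g1' : ∫ x, ∑ j, pd Q j x ^ 2 ≤ _ := g1
      linarith
    refine (Real.rpow_le_rpow (Ann_nn Q0 R) b1 y0).trans ?_
    rw [Real.mul_rpow Cs0 (by positivity), ← Real.rpow_natCast, ← Real.rpow_mul (by positivity),
      Real.mul_rpow (by norm_num) (by positivity), mul_assoc]
    push_cast
    refine mul_le_mul_of_nonneg_left (mul_le_mul_of_nonneg_left ?_ (by positivity)) (by positivity)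
    calc (1 + D R) ^ (3 * y) ≤ (1 + D R) ^ (1:ℝ) :=
          Real.rpow_le_rpow_of_exponent_le (by linarith) (by linarith)
      _ = 1 + D R := Real.rpow_one _
  have a3 : (∫ x in Ann R, G R x) ^ ((1:ℝ) / 2) ≤ K ^ ((1:ℝ) / 2) * R ^ (m / 2) := by
    refine (Real.rpow_le_rpow (Ann_nn (G0 R hR) R) (hb R hR) (by norm_num)).trans ?_
    rw [Real.mul_rpow hK (by positivity), ← Real.rpow_mul R0.le]
    apply le_of_eq; congr 2; ring
  have n2 := Real.rpow_nonneg (Ann_nn Q0 R) y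
  have n3 := Real.rpow_nonneg (Ann_nn (G0 R hR) R) ((1:ℝ) / 2)
  calc _ ≤ I ^ z * ((Cs ^ y * 2 ^ (3 * y)) * (1 + D R)) * (K ^ ((1:ℝ) / 2) * R ^ (m / 2)) := by
        refine mul_le_mul (mul_le_mul a1 a2 n2 (by positivity)) a3 n3 (by positivity)
    _ = _ := by rw [hL]; ring

lemma const_zero {s : ℝ} {f : R3 → ℝ} (hf : Sm f) (h : Li s f) (s0 : 0 < s)
    (hd : ∀ j x, pd f j x = 0) (x : R3) : f x = 0 := by
  have hc : ∀ y, f y = f x := fun y =>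
    is_const_of_fderiv_eq_zero (𝕜 := ℝ) hf.diff (fun z => fderiv_eq_zero_of_pd fun j => hd j z) y x
  have i := h.i
  simp only [hc] at i
  rw [integrable_const_iff] at i
  rcases i with i | i
  · have := (Real.rpow_eq_zero_iff_of_nonneg (abs_nonneg (f x))).1 i
    exact abs_eq_zero.1 this.1
  · exfalso
    have := i.measure_univ_lt_top
    simp at this

set_option maxHeartbeats 1000000 in
lemma core {u v : Fin 3 → R3 → ℝ} {π θ : R3 → ℝ} (hS : Sol u v π θ) {p q r : ℝ}
    (hp1 : 3 ≤ p) (hp2 : p ≤ 9 / 2) (hq1 : 2 * (p / (p - 1)) ≤ q) (hq2 : q ≤ 6)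
    (hr1 : 2 * (p / (p - 1)) ≤ r) (hr2 : r ≤ 6) (hpq : 2 / 3 ≤ 1 / p + 2 / q)
    (hpr : 2 / 3 ≤ 1 / p + 2 / r) (hqr : 2 / 3 ≤ 1 / q + 1 / r)
    (Lu : ∀ i, Li p (u i)) (Lv : ∀ i, Li q (v i)) (Lθ : Li r θ) :
    (∀ i x, u i x = 0) ∧ (∀ i x, v i x = 0) ∧ (∀ x, θ x = 0) := by
  have p0 : 0 < p := by linarith
  have pm : 0 < p - 1 := by linarith
  have lo : 18 / 7 ≤ 2 * (p / (p - 1)) := by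
    rw [← mul_div_assoc, div_le_div_iff₀ (by norm_num) pm]; linarith
  have q0 : 0 < q := by linarith
  have r0 : 0 < r := by linarith
  have conj : ∀ s, 2 * (p / (p - 1)) ≤ s → 1 / p + 2 / s ≤ 1 := by
    intro s hs
    have s0 : 0 < s := by linarith
    have h1 : 2 * p ≤ s * (p - 1) := by
      rw [← mul_div_assoc, div_le_iff₀ pm] at hs; exact hs
    rw [div_add_div _ _ p0.ne' s0.ne', div_le_one (by positivity)]
    nlinarith
  have hpp1 : 1 / p + 2 / p ≤ 1 := by rw [← add_div, div_le_one p0]; linarith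
  have hpp2 : 2 / 3 ≤ 1 / p + 2 / p := by rw [← add_div, div_le_div_iff₀ (by norm_num) p0]; linarith
  obtain ⟨C, C0, HC⟩ := localE
  have ex : ∀ R : ℝ, ∃ ψ G : R3 → ℝ, 1 ≤ R → (Cut R (2 * R) ψ ∧ (∀ i x, |pd ψ i x| ≤ C * R⁻¹) ∧ Continuous G ∧ (∀ x, 0 ≤ G x) ∧
      ∫ x in Ann R, G x ≤ C * (R⁻¹ ^ 2 * ∫ x in closedBall (0:R3) (R * 4), SS u x) ∧
      ∫ x, ψ x ^ 6 * DD u v θ x ≤ C * ∫ x in Ann R, ZZ R u v θ ψ G x) := by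
    intro R
    by_cases hR : 1 ≤ R
    · obtain ⟨ψ, G, h⟩ := HC u v π θ hS R (by linarith)
      exact ⟨ψ, G, fun _ => h⟩
    · exact ⟨0, 0, fun h => absurd h hR⟩
  choose ψ G H using ex
  have hψ := fun R hR => (H R hR).1
  have hd := fun R hR => (H R hR).2.1
  have hG := fun R hR => (H R hR).2.2.1
  have G0 := fun R hR => (H R hR).2.2.2.1
  have hGb := fun R hR => (H R hR).2.2.2.2.1
  have hE := fun R hR => (H R hR).2.2.2.2.2
  have DD0 : ∀ x, 0 ≤ DD u v θ x := fun x => by unfold DD; positivity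
  have cDD := DD_cont hS
  set D : ℝ → ℝ := fun R => ∫ x, ψ R x ^ 6 * DD u v θ x with hDdef
  have D0 : ∀ R, 0 ≤ D R := fun R => integral_nonneg fun x => by
    have := DD0 x
    show 0 ≤ ψ R x ^ 6 * DD u v θ x
    have : 0 ≤ ψ R x ^ 6 := Even.pow_nonneg (by decide) _
    positivity
  have iD : ∀ R, 1 ≤ R → Integrable fun x => ψ R x ^ 6 * DD u v θ x := fun R hR =>
    int_cc (((hψ R hR).sm.cont.pow 6).mul cDD) (hcs_zero (hψ R hR).hcs fun x hx => by simp [hx])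
  have Dle : ∀ f : R3 → ℝ, Sm f → (∀ x, ∑ j, pd f j x ^ 2 ≤ DD u v θ x) → ∀ R, 1 ≤ R →
      ∫ x, ψ R x ^ 6 * ∑ j, pd f j x ^ 2 ≤ D R := by
    intro f hf hle R hR
    refine integral_mono (int_cc (((hψ R hR).sm.cont.pow 6).mul
      (continuous_finsetSum _ fun j _ => (hf.pd j).cont.pow 2))
      (hcs_zero (hψ R hR).hcs fun x hx => by simp [hx])) (iD R hR) fun x => ?_
    exact mul_le_mul_of_nonneg_left (hle x) (Even.pow_nonneg (by decide) _)
  have du : ∀ i x, ∑ j, pd (u i) j x ^ 2 ≤ DD u v θ x := fun i x => by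
    unfold DD
    have a := Finset.single_le_sum (f := fun i => ∑ j, pd (u i) j x ^ 2)
      (fun k _ => Finset.sum_nonneg fun j _ => sq_nonneg _) (Finset.mem_univ i)
    have b : 0 ≤ ∑ i, ∑ j, pd (v i) j x ^ 2 := by positivity
    have c : 0 ≤ ∑ j, pd θ j x ^ 2 := by positivity
    linarith
  have dv : ∀ i x, ∑ j, pd (v i) j x ^ 2 ≤ DD u v θ x := fun i x => by
    unfold DD
    have a := Finset.single_le_sum (f := fun i => ∑ j, pd (v i) j x ^ 2)
      (fun k _ => Finset.sum_nonneg fun j _ => sq_nonneg _) (Finset.mem_univ i)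
    have b : 0 ≤ ∑ i, ∑ j, pd (u i) j x ^ 2 := by positivity
    have c : 0 ≤ ∑ j, pd θ j x ^ 2 := by positivity
    linarith
  have dθ : ∀ x, ∑ j, pd θ j x ^ 2 ≤ DD u v θ x := fun x => by
    unfold DD
    have b : 0 ≤ ∑ i, ∑ j, pd (u i) j x ^ 2 := by positivity
    have c : 0 ≤ ∑ i, ∑ j, pd (v i) j x ^ 2 := by positivity
    linarith
  -- bound on G
  have hKb : ∃ K, 0 ≤ K ∧ ∀ R, 1 ≤ R → ∫ x in Ann R, G R x ≤ K * R ^ (1 - 6 / p) := by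
    choose k k0 hk using fun i => ball2 (Lu i) hp1
    refine ⟨C * ∑ i, k i, mul_nonneg C0 (Finset.sum_nonneg fun i _ => k0 i), fun R hR => (hGb R hR).trans ?_⟩
    rw [mul_assoc]
    refine mul_le_mul_of_nonneg_left ?_ C0
    unfold SS
    rw [integral_finsetSum _ fun i _ => cint (fun x => u i x ^ 2) ((Lu i).c.pow 2) _, Finset.mul_sum, Finset.sum_mul]
    exact Finset.sum_le_sum fun i _ => hk i R hR
  obtain ⟨K, K0, hK⟩ := hKb
  have hm : 1 - 6 / p < 0 := by
    have : 1 < 6 / p := by rw [lt_div_iff₀ p0]; linarith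
    linarith
  have S1 : ∀ {s : ℝ} {f : R3 → ℝ}, Li s f → 2 ≤ s → s ≤ 6 → Sml D (fun R x => R⁻¹ ^ 2 * f x ^ 2) := by
    intro s f h a b
    refine Sml.of_tendsto D0 (fun R _ => continuous_const.mul (h.c.pow 2)) ?_
    simp only [integral_const_mul]
    exact T1 h a b
  have S2 : ∀ {s : ℝ} {f : R3 → ℝ} (i : Fin 3), Li s f → 0 < s → 1 / p + 2 / s ≤ 1 → 2 / 3 ≤ 1 / p + 2 / s →
      Sml D (fun R x => R⁻¹ * (|u i x| * f x ^ 2)) := by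
    intro s f i h s0 a b
    refine Sml.of_tendsto D0 (fun R _ => continuous_const.mul ((Lu i).c.abs.mul (h.c.pow 2))) ?_
    simp only [integral_const_mul]
    simpa using T2 h (Lu i) s0 p0 a b
  have S3 : ∀ i, Sml D (fun R x => R⁻¹ * (|θ x| * |v i x|)) := by
    intro i
    refine Sml.of_tendsto D0 (fun R _ => continuous_const.mul (Lθ.c.abs.mul (Lv i).c.abs)) ?_
    simp only [integral_const_mul]
    have a : 1 / r ≤ 1 / 2 := one_div_le_one_div_of_le (by norm_num) (by linarith)
    have b : 1 / q ≤ 1 / 2 := one_div_le_one_div_of_le (by norm_num) (by linarith)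
    simpa using T3 (Lv i) Lθ q0 r0 (by linarith) (by linarith)
  have S4 : ∀ {s : ℝ} {f : R3 → ℝ}, Sm f → Li s f → 12 / 5 ≤ s → 2 / 3 ≤ 1 / p + 2 / s →
      (∀ x, ∑ j, pd f j x ^ 2 ≤ DD u v θ x) →
      Sml D (fun R x => ψ R x ^ 4 * Real.sqrt (G R x) * f x ^ 2) := by
    intro s f hf h a b hle
    by_cases h4 : s ≤ 4
    · exact T4b hf h a h4 K0 C0 hψ hd hG G0 (Dle f hf hle) D0 hK hm
    · refine Sml.of_tendsto D0 (fun R hR => (((hψ R hR).sm.cont.pow 4).mul (hG R hR).sqrt).mul (hf.cont.pow 2)) ?_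
      refine T4a h (by linarith) K0 hψ hG G0 hK ?_
      have e1 : 6 / p = 6 * (1 / p) := by ring
      rw [e1]; linarith
  have S5 : Sml D (fun R x => G R x) := by
    refine Sml.of_tendsto D0 hG ?_
    have t : Tendsto (fun R : ℝ => K * R ^ (1 - 6 / p)) atTop (nhds 0) := by
      have := tendsto_rpow_neg_atTop (y := - (1 - 6 / p)) (by linarith)
      simpa using this.const_mul K
    refine squeeze_zero' ?_ ?_ t
    · filter_upwards [eventually_ge_atTop 1] with R hR
      exact Ann_nn (G0 R hR) R
    · filter_upwards [eventually_ge_atTop 1] with R hR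
      exact hK R hR
  have SZ : Sml D (fun R x => ZZ R u v θ (ψ R) (G R) x) := by
    have A1 := ((Sml.sum fun i => S1 (Lu i) (by linarith) (by linarith)).add
      (Sml.sum fun i => S1 (Lv i) (by linarith) (by linarith))).add (S1 Lθ (by linarith) (by linarith))
    have A2 := ((Sml.sum fun i => Sml.sum fun j => S2 i (Lu j) p0 hpp1 hpp2).add
      (Sml.sum fun i => Sml.sum fun j => S2 i (Lv j) q0 (conj q hq1) hpq)).add
      (Sml.sum fun i => S2 i Lθ r0 (conj r hr1) hpr)
    have A3 := Sml.sum S3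
    have A4 := (Sml.sum fun i => S4 (hS.hu i) (Lu i) (by linarith) hpp2 (du i)).add
      (Sml.sum fun i => S4 (hS.hv i) (Lv i) (by linarith) hpq (dv i))
    have A := (((A1.add A2).add A3).add A4).add S5
    convert A using 3 with R x
    unfold ZZ SS SA
    simp only [Fin.sum_univ_three]
    ring
  obtain ⟨δ, δ0, hδ⟩ := SZ.bd
  have Cδ : Tendsto (fun R => 2 * (C * δ R)) atTop (nhds 0) := by
    simpa using (δ0.const_mul C).const_mul 2
  have Dsm : ∀ᶠ R in atTop, D R ≤ 2 * (2 * (C * δ R)) := by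
    filter_upwards [hδ, eventually_ge_atTop 1, Cδ.eventually (gt_mem_nhds (show (0:ℝ) < 1 by norm_num))] with R a hR b
    have e := (hE R hR).trans (mul_le_mul_of_nonneg_left a C0)
    have e' : D R ≤ C * δ R * (1 + D R) := by rw [mul_assoc]; exact e
    have d0 := D0 R
    nlinarith
  have Dt : Tendsto D atTop (nhds 0) :=
    squeeze_zero' (Eventually.of_forall D0) Dsm (by simpa using Cδ.const_mul 2)
  have DDz : ∀ x, DD u v θ x = 0 := by
    have z : ∀ ρ : ℝ, ∫ x in closedBall (0:R3) ρ, DD u v θ x ≤ 0 := by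
      intro ρ
      refine ge_of_tendsto Dt ?_
      filter_upwards [eventually_ge_atTop 1, eventually_ge_atTop ρ] with R hR hρ
      refine ball_le cDD (((hψ R hR).sm.cont.pow 6).mul cDD)
        (hcs_zero (hψ R hR).hcs fun x hx => by simp [hx])
        (fun x => mul_nonneg (Even.pow_nonneg (by decide) _) (DD0 x)) fun x hx => ?_
      rw [(hψ R hR).one x (closedBall_subset_closedBall hρ hx)]
      simp
    intro x
    by_contra hne
    have pos : 0 < ∫ y in closedBall (0:R3) (‖x‖ + 1), DD u v θ y := by
      have hi := cint _ cDD (‖x‖ + 1)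
      rw [setIntegral_pos_iff_support_of_nonneg_ae (Eventually.of_forall DD0) hi]
      have o : IsOpen (Function.support (DD u v θ) ∩ ball (0:R3) (‖x‖ + 1)) :=
        cDD.isOpen_support.inter isOpen_ball
      refine (o.measure_pos volume ⟨x, hne, by simp⟩).trans_le (measure_mono ?_)
      exact Set.inter_subset_inter_right _ ball_subset_closedBall
    linarith [z (‖x‖ + 1)]
  have fin : ∀ {s : ℝ} {f : R3 → ℝ}, Sm f → Li s f → 0 < s → (∀ x, ∑ j, pd f j x ^ 2 ≤ DD u v θ x) →
      ∀ x, f x = 0 := by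
    intro s f hf h s0 hle
    refine const_zero hf h s0 fun j x => ?_
    have a := hle x
    rw [DDz x] at a
    have b := Finset.single_le_sum (f := fun j => pd f j x ^ 2) (fun k _ => sq_nonneg _) (Finset.mem_univ j)
    have c : pd f j x ^ 2 = 0 := le_antisymm (by linarith) (sq_nonneg _)
    exact pow_eq_zero_iff (by norm_num) |>.1 c
  exact ⟨fun i => fin (hS.hu i) (Lu i) p0 (du i), fun i => fin (hS.hv i) (Lv i) q0 (dv i), fin hS.hθ Lθ r0 dθ⟩

lemma li_coord {s : ℝ} {w : R3 → R3} (hw : ContDiff ℝ (⊤:ℕ∞) w) (s0 : 0 < s)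
    (h : ∫⁻ x, ENNReal.ofReal (‖w x‖ ^ s) < ⊤) (i : Fin 3) :
    Sm (fun y => w y i) ∧ Li s (fun y => w y i) := by
  have sm : Sm (fun y => w y i) := (EuclideanSpace.proj i : R3 →L[ℝ] ℝ).contDiff.comp hw
  refine ⟨sm, sm.cont, ?_⟩
  have c : Continuous fun x => ‖w x‖ ^ s := hw.continuous.norm.rpow_const fun _ => Or.inr s0.le
  have I : Integrable fun x => ‖w x‖ ^ s := by
    refine ⟨c.aestronglyMeasurable, ?_⟩
    rw [hasFiniteIntegral_iff_ofReal (Eventually.of_forall fun x => by positivity)]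
    exact h
  refine I.mono' (sm.cont.abs.rpow_const fun _ => Or.inr s0.le).aestronglyMeasurable
    (Eventually.of_forall fun x => ?_)
  rw [Real.norm_eq_abs, abs_of_nonneg (Real.rpow_nonneg (abs_nonneg _) _)]
  exact Real.rpow_le_rpow (abs_nonneg _) (coord_le (w x) i) s0.le

lemma li_scal {s : ℝ} {w : R3 → ℝ} (hw : ContDiff ℝ (⊤:ℕ∞) w) (s0 : 0 < s)
    (h : ∫⁻ x, ENNReal.ofReal (|w x| ^ s) < ⊤) : Li s w := by
  refine ⟨hw.continuous, ?_⟩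
  have c : Continuous fun x => |w x| ^ s := hw.continuous.abs.rpow_const fun _ => Or.inr s0.le
  refine ⟨c.aestronglyMeasurable, ?_⟩
  rw [hasFiniteIntegral_iff_ofReal (Eventually.of_forall fun x => by positivity)]
  exact h

theorem liouville_tcm_B8 (u v : R3 → R3) (pr θ : R3 → ℝ)
    (hu : ContDiff ℝ (⊤ : ℕ∞) u) (hv : ContDiff ℝ (⊤ : ℕ∞) v)
    (hpr : ContDiff ℝ (⊤ : ℕ∞) pr) (hθ : ContDiff ℝ (⊤ : ℕ∞) θ)
    (hsol : TCM u v pr θ)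
    (p q r : ℝ)
    (hp1 : 3 ≤ p) (hp2 : p ≤ 9 / 2)
    (hq1 : 2 * (p / (p - 1)) ≤ q) (hq2 : q ≤ 6)
    (hr1 : 2 * (p / (p - 1)) ≤ r) (hr2 : r ≤ 6)
    (hpq : 2 / 3 ≤ 1 / p + 2 / q) (hpr2 : 2 / 3 ≤ 1 / p + 2 / r)
    (hqr : 2 / 3 ≤ 1 / q + 1 / r)
    (hLu : (∫⁻ x : R3, ENNReal.ofReal (‖u x‖ ^ p)) < ⊤)
    (hLv : (∫⁻ x : R3, ENNReal.ofReal (‖v x‖ ^ q)) < ⊤)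
    (hLθ : (∫⁻ x : R3, ENNReal.ofReal (|θ x| ^ r)) < ⊤) :
    (∀ x, u x = 0) ∧ (∀ x, v x = 0) ∧ (∀ x, θ x = 0) := by
  have lo : 0 < 2 * (p / (p - 1)) := by
    have : 0 < p - 1 := by linarith
    have : 0 < p := by linarith
    positivity
  have U := li_coord hu (by linarith) hLu
  have V := li_coord hv (by linarith) hLv
  have T := li_scal hθ (by linarith) hLθ
  obtain ⟨s1, s2, s3, s4⟩ := hsol
  have S : Sol (fun i y => u y i) (fun i y => v y i) pr θ :=
    ⟨fun i => (U i).1, fun i => (V i).1, hpr, hθ, s1, s2, s3, s4⟩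
  obtain ⟨a, b, c⟩ := core S hp1 hp2 hq1 hq2 hr1 hr2 hpq hpr2 hqr (fun i => (U i).2) (fun i => (V i).2) T
  refine ⟨fun x => ?_, fun x => ?_, c⟩
  · ext i; exact a i x
  · ext i; exact b i x
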